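/- arXiv:1806.00220 — 15 statements merged into one kernel-verified Lean document; each statement's English description precedes it below -/
import Mathlib

section
/- The subset Γ' is cofinal in Γ: for every γ ∈ Γ there exists γ' ∈ Γ' with γ ≤ γ'. Here Γ' consists of those (X, P) ∈ Γ such that for every component c of G − X the set of vertices covered by the P-class of c, namely ⋃ {↑d : d a component of G − X with P.Rel d c}, is an infinite subset of V. -/
open SimpleGraph

/-- An element of `Γ`: a finite vertex set `X` together with a finite partition
(setoid with finitely many classes) of the components of `G − X`. -/
structure Gamma {V : Type*} (G : SimpleGraph V) where
  X : Finset V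
  P : Setoid (G.ComponentCompl (X : Set V))
  finiteClasses : Finite (Quotient P)

/-- The order on `Γ`: `(X, P) ≤ (Y, Q)` iff `X ⊆ Y` and `Q` refines the pullback of `P`
along `ComponentCompl.hom`. -/
def Gamma.le {V : Type*} {G : SimpleGraph V} (γ δ : Gamma G) : Prop :=
  ∃ h : γ.X ⊆ δ.X, ∀ c c' : G.ComponentCompl (δ.X : Set V),
    δ.P.r c c' →
      γ.P.r (c.hom (Finset.coe_subset.mpr h)) (c'.hom (Finset.coe_subset.mpr h))

/-- Membership in `Γ'`: every partition class covers an infinite set of vertices. -/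
def Gamma.mem_Gamma' {V : Type*} {G : SimpleGraph V} (γ : Gamma G) : Prop :=
  ∀ c : G.ComponentCompl (γ.X : Set V),
    {v : V | ∃ d : G.ComponentCompl (γ.X : Set V), γ.P.r d c ∧ v ∈ (d : Set V)}.Infinite

/-- `Γ'` is cofinal in `Γ`. -/
theorem gamma'_cofinal {V : Type*} [Infinite V] (G : SimpleGraph V) (hG : G.Connected) :
    ∀ γ : Gamma G, ∃ γ' : Gamma G, γ.le γ' ∧ γ'.mem_Gamma' := by
  classical
  rintro ⟨X, P, hP⟩
  let S : Quotient P → Set V := fun q =>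
    {v | ∃ h : v ∉ (X : Set V), Quotient.mk P (G.componentComplMk h) = q}
  have hF : (⋃ q : {q : Quotient P // (S q).Finite}, S q.1).Finite :=
    Set.finite_iUnion fun q => q.2
  let Y : Finset V := X ∪ hF.toFinset
  have hXY : X ⊆ Y := Finset.subset_union_left
  have hXY' : (X : Set V) ⊆ (Y : Set V) := Finset.coe_subset.mpr hXY
  let f : G.ComponentCompl (Y : Set V) → G.ComponentCompl (X : Set V) := fun c => c.hom hXY'
  refine ⟨⟨Y, P.comap f, ?_⟩, ⟨hXY, fun c c' h => h⟩, ?_⟩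
  · refine Finite.of_injective
      (Quotient.map' (s₁ := P.comap f) (s₂ := P) f (fun _ _ h => h)) ?_
    rintro ⟨a⟩ ⟨b⟩ h
    exact Quotient.sound (s := P.comap f) (Quotient.exact (s := P) h)
  · intro c
    change G.ComponentCompl (Y : Set V) at c
    obtain ⟨v, hv, rfl⟩ := c.exists_eq_mk
    have hvX : v ∉ (X : Set V) := fun h => hv (hXY' h)
    have hinf : (S (Quotient.mk P (G.componentComplMk hvX))).Infinite := by
      intro hfin
      apply hv
      have : v ∈ hF.toFinset := by
        rw [Set.Finite.mem_toFinset]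
        exact Set.mem_iUnion.mpr ⟨⟨_, hfin⟩, hvX, rfl⟩
      exact Finset.mem_coe.mpr (Finset.mem_union_right _ this)
    refine (hinf.sdiff Y.finite_toSet).mono ?_
    rintro w ⟨⟨hwX, hw⟩, hwY⟩
    exact ⟨G.componentComplMk hwY, Quotient.exact (s := P) hw, G.componentComplMk_mem hwY⟩
end

section
/- The tangle space Θ is homeomorphic to 𝒫; more precisely, the map sending each τ = (U_X)_{X : Finset V} ∈ Θ to the family (q_γ)_{γ ∈ Γ}, where q_γ is the unique element of Quotient γ.P with (U_{γ.X}).map (Quotient.mk γ.P) = pure q_γ, is a homeomorphism from Θ onto 𝒫. -/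
open SimpleGraph

/-- The bonding map `Quotient δ.P → Quotient γ.P` for `γ ≤ δ`, sending `⟦c⟧` to
`⟦ComponentCompl.hom c⟧`. -/
noncomputable def Gamma.bond {V : Type*} {G : SimpleGraph V} {γ δ : Gamma G} (h : γ.le δ) :
    Quotient δ.P → Quotient γ.P :=
  Quotient.map' (ComponentCompl.hom (Finset.coe_subset.mpr h.choose))
    (fun c c' hcc => h.choose_spec c c' hcc)

/-- The partition quotients carry the discrete topology. -/
instance {V : Type*} {G : SimpleGraph V} (γ : Gamma G) : TopologicalSpace (Quotient γ.P) := ⊥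

instance {V : Type*} {G : SimpleGraph V} (γ : Gamma G) : DiscreteTopology (Quotient γ.P) :=
  ⟨rfl⟩

/-- The tangle space `Θ` of `G`: the inverse limit of the ultrafilter spaces
`Ultrafilter (G.ComponentCompl X)` over the finite vertex sets `X`. -/
def TangleSpace {V : Type*} (G : SimpleGraph V) : Type _ :=
  {U : ∀ X : Finset V, Ultrafilter (G.ComponentCompl (X : Set V)) //
    ∀ (X Y : Finset V) (h : X ⊆ Y),
      (U Y).map (ComponentCompl.hom (Finset.coe_subset.mpr h)) = U X}

/-- The space `𝒫`: the inverse limit over `Γ` of the finite discrete spaces `Quotient γ.P`. -/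
def PSpace {V : Type*} (G : SimpleGraph V) : Type _ :=
  {q : ∀ γ : Gamma G, Quotient γ.P //
    ∀ (γ δ : Gamma G) (h : γ.le δ), Gamma.bond h (q δ) = q γ}

instance {V : Type*} (G : SimpleGraph V) : TopologicalSpace (TangleSpace G) :=
  instTopologicalSpaceSubtype

instance {V : Type*} (G : SimpleGraph V) : TopologicalSpace (PSpace G) :=
  instTopologicalSpaceSubtype

namespace TanglePf

variable {V : Type*} {G : SimpleGraph V}

/-- two-set partition -/
abbrev two (X : Finset V) (A B : Set (G.ComponentCompl (X : Set V))) : Gamma G where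
  X := X
  P := Setoid.ker (fun c => ((c ∈ A, c ∈ B) : Prop × Prop))
  finiteClasses := Finite.of_injective _ (Setoid.kerLift_injective _)

theorem two_r (X : Finset V) (A B : Set (G.ComponentCompl (X : Set V)))
    (c c' : G.ComponentCompl (X : Set V)) :
    (two X A B).P.r c c' ↔ ((c ∈ A ↔ c' ∈ A) ∧ (c ∈ B ↔ c' ∈ B)) := by
  change ((c ∈ A, c ∈ B) : Prop × Prop) = (c' ∈ A, c' ∈ B) ↔ _
  simp

/-- membership decided by `q` -/
def ev (q : PSpace G) (X : Finset V) (A : Set (G.ComponentCompl (X : Set V))) : Prop :=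
  ∃ c : G.ComponentCompl (X : Set V), q.val (two X A A) = Quotient.mk (two X A A).P c ∧ c ∈ A

theorem bond_mk {γ δ : Gamma G} (h : γ.le δ) (hs : γ.X ⊆ δ.X)
    (c : G.ComponentCompl (δ.X : Set V)) :
    Gamma.bond h (Quotient.mk δ.P c)
      = Quotient.mk γ.P (c.hom (Finset.coe_subset.mpr hs)) := rfl

theorem key (q : PSpace G) (γ : Gamma G) (c : G.ComponentCompl (γ.X : Set V))
    (hc : q.val γ = Quotient.mk γ.P c) (X : Finset V) (hX : X ⊆ γ.X)
    (A : Set (G.ComponentCompl (X : Set V)))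
    (hA : ∀ d d', γ.P.r d d' →
      (d.hom (Finset.coe_subset.mpr hX) ∈ A ↔ d'.hom (Finset.coe_subset.mpr hX) ∈ A)) :
    ev q X A ↔ c.hom (Finset.coe_subset.mpr hX) ∈ A := by
  have hle : (two X A A).le γ := ⟨hX, fun d d' h => (two_r X A A _ _).2 ⟨hA d d' h, hA d d' h⟩⟩
  have h1 : q.val (two X A A)
      = Quotient.mk (two X A A).P (c.hom (Finset.coe_subset.mpr hX)) := by
    rw [← q.property _ _ hle, hc]
    exact bond_mk hle hX c
  constructor
  · rintro ⟨d, hd, hdA⟩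
    have h2 := (two_r X A A _ _).1 (Quotient.exact (hd.symm.trans h1))
    exact h2.1.1 hdA
  · intro h
    exact ⟨_, h1, h⟩

theorem key' (q : PSpace G) (γ : Gamma G) (c : G.ComponentCompl (γ.X : Set V))
    (hc : q.val γ = Quotient.mk γ.P c)
    (A : Set (G.ComponentCompl (γ.X : Set V)))
    (hA : ∀ d d', γ.P.r d d' → (d ∈ A ↔ d' ∈ A)) :
    ev q γ.X A ↔ c ∈ A := by
  have := key q γ c hc γ.X (Finset.Subset.refl _) A (fun d d' h => by
    simpa only [ComponentCompl.hom_refl] using hA d d' h)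
  simpa only [ComponentCompl.hom_refl] using this

theorem ex2 (q : PSpace G) (X : Finset V) (A B : Set (G.ComponentCompl (X : Set V))) :
    ∃ c, (ev q X A ↔ c ∈ A) ∧ (ev q X B ↔ c ∈ B) ∧ (ev q X (A ∩ B) ↔ c ∈ A ∩ B)
      ∧ (ev q X Aᶜ ↔ c ∈ Aᶜ) := by
  obtain ⟨c, hc⟩ := Quotient.exists_rep (q.val (two X A B))
  have K := fun S hS => key' q (two X A B) c hc.symm S hS
  refine ⟨c, K A ?_, K B ?_, K (A ∩ B) ?_, K Aᶜ ?_⟩ <;> intro d d' h <;>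
    have h' := (two_r X A B _ _).1 h
  · exact h'.1
  · exact h'.2
  · exact and_congr h'.1 h'.2
  · exact not_congr h'.1

/-- the ultrafilter given by `q` -/
noncomputable def uf (q : PSpace G) (X : Finset V) : Ultrafilter (G.ComponentCompl (X : Set V)) :=
  Ultrafilter.ofComplNotMemIff
    { sets := {A | ev q X A}
      univ_sets := by
        obtain ⟨c, h, -⟩ := ex2 q X Set.univ Set.univ
        exact h.2 trivial
      sets_of_superset := by
        intro A B hA hAB
        obtain ⟨c, h, h', -⟩ := ex2 q X A B
        exact h'.2 (hAB (h.1 hA))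
      inter_sets := by
        intro A B hA hB
        obtain ⟨c, h, h', h'', -⟩ := ex2 q X A B
        exact h''.2 ⟨h.1 hA, h'.1 hB⟩ }
    (by
      intro A
      obtain ⟨c, h, -, -, h'⟩ := ex2 q X A A
      change ¬ ev q X Aᶜ ↔ ev q X A
      rw [h, h']
      simp)

theorem mem_uf (q : PSpace G) (X : Finset V) (A : Set (G.ComponentCompl (X : Set V))) :
    A ∈ uf q X ↔ ev q X A := Iff.rfl

/-- the inverse map -/
noncomputable def inv (q : PSpace G) : TangleSpace G :=
  ⟨uf q, by
    intro X Y h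
    ext A
    rw [Ultrafilter.mem_map, mem_uf, mem_uf]
    set B := (ComponentCompl.hom (Finset.coe_subset.mpr h)) ⁻¹' A with hB
    obtain ⟨c, hc⟩ := Quotient.exists_rep (q.val (two Y B B))
    rw [key' q (two Y B B) c hc.symm B (fun d d' h => ((two_r Y B B _ _).1 h).1)]
    rw [key q (two Y B B) c hc.symm X h A (fun d d' h => ((two_r Y B B _ _).1 h).1)]
    rfl⟩

theorem exists_pure (τ : TangleSpace G) (γ : Gamma G) :
    ∃ x, (τ.val γ.X).map (Quotient.mk γ.P) = pure x := by
  have := γ.finiteClasses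
  exact Ultrafilter.eq_pure_of_finite _

theorem eq_of_mem {α : Type*} {u : Ultrafilter α} {x y : α} (h : u = pure x)
    (hy : {y} ∈ u) : y = x := by
  subst h
  exact (Ultrafilter.mem_pure.1 hy).symm

/-- the forward map -/
noncomputable def fwd (τ : TangleSpace G) : PSpace G :=
  ⟨fun γ => (exists_pure τ γ).choose, by
    intro γ δ h
    have h1 := (exists_pure τ γ).choose_spec
    have h2 := (exists_pure τ δ).choose_spec
    set x := (exists_pure τ γ).choose
    set y := (exists_pure τ δ).choose
    refine eq_of_mem h1 ?_
    rw [← τ.property γ.X δ.X h.choose, Ultrafilter.map_map]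
    have h3 : Quotient.mk γ.P ∘ ComponentCompl.hom (Finset.coe_subset.mpr h.choose)
      = Gamma.bond h ∘ Quotient.mk δ.P := rfl
    rw [h3, ← Ultrafilter.map_map, h2]
    exact rfl⟩

theorem fwd_spec (τ : TangleSpace G) (γ : Gamma G) :
    (τ.val γ.X).map (Quotient.mk γ.P) = pure ((fwd τ).val γ) :=
  (exists_pure τ γ).choose_spec

theorem fwd_eq_iff (τ : TangleSpace G) (γ : Gamma G) (x : Quotient γ.P) :
    (fwd τ).val γ = x ↔ Quotient.mk γ.P ⁻¹' {x} ∈ τ.val γ.X := by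
  rw [← Ultrafilter.mem_map, fwd_spec, Ultrafilter.mem_pure]
  rfl

theorem ev_fwd (τ : TangleSpace G) (X : Finset V) (A : Set (G.ComponentCompl (X : Set V))) :
    ev (fwd τ) X A ↔ A ∈ τ.val X := by
  obtain ⟨c, hc⟩ := Quotient.exists_rep ((fwd τ).val (two X A A))
  rw [key' (fwd τ) (two X A A) c hc.symm A (fun d d' h => ((two_r X A A _ _).1 h).1)]
  have h := (fwd_eq_iff τ (two X A A) _).1 hc.symm
  have h0 : ∀ d ∈ Quotient.mk (two X A A).P ⁻¹' {Quotient.mk (two X A A).P c},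
      (d ∈ A ↔ c ∈ A) := fun d hd => ((two_r X A A _ _).1 (Quotient.exact hd)).1
  constructor
  · intro hcA
    exact Filter.mem_of_superset h (fun d hd => (h0 d hd).2 hcA)
  · intro hA
    obtain ⟨d, hd, hdA⟩ := Ultrafilter.nonempty_of_mem (Filter.inter_mem h hA)
    exact (h0 d hd).1 hdA

theorem left_inv (τ : TangleSpace G) : inv (fwd τ) = τ := by
  apply Subtype.ext
  funext X
  ext A
  exact ev_fwd τ X A

theorem right_inv (q : PSpace G) : fwd (inv q) = q := by
  apply Subtype.ext
  funext γ
  rw [fwd_eq_iff]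
  change ev q γ.X _
  obtain ⟨c, hc⟩ := Quotient.exists_rep (q.val γ)
  rw [key' q γ c hc.symm]
  · exact hc
  · intro d d' h
    have : Quotient.mk γ.P d = Quotient.mk γ.P d' := Quotient.sound h
    simp only [Set.mem_preimage, this]

theorem cont_fwd : Continuous (fwd (G := G)) := by
  refine Continuous.subtype_mk (continuous_pi fun γ => ?_) _
  refine continuous_discrete_rng.2 fun x => ?_
  have : (fun τ : TangleSpace G => (fwd τ).val γ) ⁻¹' {x}
      = (fun τ : TangleSpace G => τ.val γ.X) ⁻¹' {u | Quotient.mk γ.P ⁻¹' {x} ∈ u} := by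
    ext τ
    exact fwd_eq_iff τ γ x
  change IsOpen ((fun τ : TangleSpace G => (fwd τ).val γ) ⁻¹' {x})
  rw [this]
  exact (ultrafilter_isOpen_basic _).preimage ((continuous_apply γ.X).comp continuous_subtype_val)

theorem open_pre (γ : Gamma G) (S : Set (Quotient γ.P)) :
    IsOpen ((fun q : PSpace G => q.val γ) ⁻¹' S) :=
  (isOpen_discrete S).preimage ((continuous_apply γ).comp continuous_subtype_val)

theorem cont_inv : Continuous (inv (G := G)) := by
  refine Continuous.subtype_mk (continuous_pi fun X => ?_) _
  refine ultrafilterBasis_is_basis.continuous_iff.2 ?_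
  rintro _ ⟨A, rfl⟩
  have : (fun q : PSpace G => uf q X) ⁻¹' {u | A ∈ u}
      = (fun q : PSpace G => q.val (two X A A)) ⁻¹'
        {x | ∃ c, x = Quotient.mk (two X A A).P c ∧ c ∈ A} := rfl
  change IsOpen ((fun q : PSpace G => uf q X) ⁻¹' {u | A ∈ u})
  rw [this]
  exact open_pre (two X A A) _

end TanglePf

/-- The tangle space `Θ` is homeomorphic to `𝒫` via the map sending `τ = (U_X)` to the
family `(q_γ)`, where `q_γ` is characterised by `(U_{γ.X}).map (Quotient.mk γ.P) = pure q_γ`. -/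
theorem tangleSpace_homeo_PSpace {V : Type*} [Infinite V] (G : SimpleGraph V)
    (hG : G.Connected) :
    ∃ φ : TangleSpace G ≃ₜ PSpace G,
      ∀ (τ : TangleSpace G) (γ : Gamma G),
        (τ.val γ.X).map (Quotient.mk γ.P) = pure ((φ τ).val γ) := by
  exact ⟨{ toFun := TanglePf.fwd
           invFun := TanglePf.inv
           left_inv := TanglePf.left_inv
           right_inv := TanglePf.right_inv
           continuous_toFun := TanglePf.cont_fwd
           continuous_invFun := TanglePf.cont_inv }, TanglePf.fwd_spec⟩
end

section
/- Let X be a normal Hausdorff space, D a nonempty type with the discrete topology, and f : X → D a continuous surjection. Let F : StoneCech X → Ultrafilter D be the continuous extension (stoneCechExtend) of the map x ↦ pure (f x). Then for every ultrafilter U on D, the fibre F ⁻¹' {U} equals ⋂_{J ∈ U} closure (stoneCechUnit '' (f ⁻¹' J)), the U-limit of the family of fibres of f. -/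
/-- For a continuous surjection `f` from a normal Hausdorff space `X` onto a discrete space `D`,
the fibres of the Stone-Čech extension `F : βX → βD = Ultrafilter D` of `x ↦ pure (f x)`
are precisely the `U`-limits of the fibres of `f`: the fibre over an ultrafilter `U` equals
`⋂_{J ∈ U} closure (stoneCechUnit '' f ⁻¹' J)`. -/
theorem fibre_stoneCechExtend_eq_ultrafilter_limit
    {X D : Type*} [TopologicalSpace X] [T4Space X]
    [TopologicalSpace D] [DiscreteTopology D] [Nonempty D]
    (f : X → D) (hf : Continuous f) (hsurj : Function.Surjective f)
    (U : Ultrafilter D) :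
    stoneCechExtend (continuous_of_discreteTopology.comp hf :
        Continuous fun x => (pure (f x) : Ultrafilter D)) ⁻¹' {U} =
      ⋂ (J : Set D) (_ : J ∈ U), closure (stoneCechUnit '' (f ⁻¹' J)) := by
  have hg : Continuous fun x => (pure (f x) : Ultrafilter D) :=
    continuous_of_discreteTopology.comp hf
  change stoneCechExtend hg ⁻¹' {U} = _
  have hF := continuous_stoneCechExtend hg
  have hval : ∀ x, stoneCechExtend hg (stoneCechUnit x) = pure (f x) :=
    stoneCechExtend_stoneCechUnit hg
  ext z
  simp only [Set.mem_preimage, Set.mem_singleton_iff, Set.mem_iInter]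
  constructor
  · intro hz J hJ
    have hV : IsOpen (stoneCechExtend hg ⁻¹' {u | J ∈ u}) :=
      (ultrafilter_isOpen_basic J).preimage hF
    have hzV : z ∈ stoneCechExtend hg ⁻¹' {u | J ∈ u} := by
      simpa [hz] using hJ
    refine closure_mono ?_ (denseRange_stoneCechUnit.open_subset_closure_inter hV hzV)
    rintro _ ⟨h, x, rfl⟩
    refine ⟨x, ?_, rfl⟩
    rw [Set.mem_preimage, hval] at h
    exact Ultrafilter.mem_pure.1 h
  · intro hz
    refine Ultrafilter.coe_le_coe.1 fun J hJ => ?_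
    have hC : IsClosed (stoneCechExtend hg ⁻¹' {u | J ∈ u}) :=
      (ultrafilter_isClosed_basic J).preimage hF
    refine closure_minimal ?_ hC (hz J hJ)
    rintro _ ⟨x, hx, rfl⟩
    rw [Set.mem_preimage, hval]
    exact Ultrafilter.mem_pure.2 hx
end

section
/- Let X be a normal Hausdorff space, D a nonempty type with the discrete topology, and f : X → D a continuous surjection. Let F : StoneCech X → Ultrafilter D be the continuous extension (stoneCechExtend) of the map x ↦ pure (f x). Then for every subset J ⊆ D, the closure of stoneCechUnit '' (f ⁻¹' J) in StoneCech X equals F ⁻¹' {U : Ultrafilter D | J ∈ U}. -/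
/-- For a continuous surjection `f` from a normal Hausdorff space `X` onto a discrete space `D`,
with `F : βX → βD = Ultrafilter D` the Stone-Čech extension of `x ↦ pure (f x)`:
for every `J ⊆ D`, the closure of `stoneCechUnit '' (f ⁻¹' J)` in `βX` equals
`F ⁻¹' {U | J ∈ U}`. -/
theorem closure_preimage_eq_preimage_stoneCechExtend
    {X D : Type*} [TopologicalSpace X] [T4Space X]
    [TopologicalSpace D] [DiscreteTopology D] [Nonempty D]
    (f : X → D) (hf : Continuous f) (hsurj : Function.Surjective f)
    (J : Set D) :
    closure (stoneCechUnit '' (f ⁻¹' J)) =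
      stoneCechExtend (continuous_of_discreteTopology.comp hf :
          Continuous fun x => (pure (f x) : Ultrafilter D)) ⁻¹'
        {U : Ultrafilter D | J ∈ U} := by
  have hg : Continuous fun x => (pure (f x) : Ultrafilter D) :=
    continuous_of_discreteTopology.comp hf
  have key : ∀ x, stoneCechExtend hg (stoneCechUnit x) = pure (f x) :=
    fun x => stoneCechExtend_stoneCechUnit hg x
  have hc := continuous_stoneCechExtend hg
  apply Set.Subset.antisymm
  · refine closure_minimal ?_ ((ultrafilter_isClosed_basic J).preimage hc)
    rintro _ ⟨x, hx, rfl⟩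
    change J ∈ stoneCechExtend hg (stoneCechUnit x)
    rw [key]
    exact hx
  · refine (denseRange_stoneCechUnit.open_subset_closure_inter
      ((ultrafilter_isOpen_basic J).preimage hc)).trans (closure_mono ?_)
    rintro _ ⟨hx, x, rfl⟩
    change J ∈ stoneCechExtend hg (stoneCechUnit x) at hx
    rw [key] at hx
    exact ⟨x, hx, rfl⟩
end

section
/- Let I be a type with the discrete topology and K : I → Type a family of topological spaces, each compact, Hausdorff, and connected (hence nonempty). Let X := Σ i, K i be their topological sum and let F : StoneCech X → Ultrafilter I be the continuous extension (stoneCechExtend) of the map p ↦ pure p.1 (i.e. of pure composed with the projection Sigma.fst). Then the connected components of StoneCech X are exactly the fibres of F: for every a : StoneCech X, connectedComponent a = F ⁻¹' {F a}. -/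
variable {I : Type*} [TopologicalSpace I] [DiscreteTopology I]
  (K : I → Type*) [∀ i, TopologicalSpace (K i)]

/-- The projection of the topological sum `Σ i, K i` to `βI = Ultrafilter I`,
`p ↦ pure p.1`, is continuous. -/
theorem continuous_pure_sigma_fst :
    Continuous fun p : Σ i, K i => (pure p.1 : Ultrafilter I) :=
  continuous_sigma fun i =>
    (continuous_const : Continuous fun _ : K i => (pure i : Ultrafilter I))

/-- For a topological sum `X = Σ i, K i` of continua over a discrete index type `I`, the
connected components of `βX` are exactly the fibres of the Stone-Čech extension
`F : βX → βI = Ultrafilter I` of the projection `p ↦ pure p.1`. -/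
theorem connectedComponent_stoneCech_sigma_eq_fibre
    [∀ i, CompactSpace (K i)] [∀ i, T2Space (K i)] [∀ i, ConnectedSpace (K i)]
    (a : StoneCech (Σ i, K i)) :
    connectedComponent a =
      stoneCechExtend (continuous_pure_sigma_fst K) ⁻¹'
        {stoneCechExtend (continuous_pure_sigma_fst K) a} := by
  set F := stoneCechExtend (continuous_pure_sigma_fst K) with hF
  have hc : Continuous F := continuous_stoneCechExtend _
  have hu : ∀ p : Σ i, K i, F (stoneCechUnit p) = pure p.1 := fun p =>
    stoneCechExtend_stoneCechUnit (continuous_pure_sigma_fst K) p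
  apply Set.Subset.antisymm
  · intro b hb
    have h := (isPreconnected_connectedComponent (x := a)).image F hc.continuousOn
    exact h.subsingleton (Set.mem_image_of_mem F hb)
      (Set.mem_image_of_mem F mem_connectedComponent)
  · intro b hb
    have hb' : F b = F a := hb
    rw [connectedComponent_eq_iInter_isClopen, Set.mem_iInter]
    rintro ⟨Z, hZ, haZ⟩
    let S : Set I := {i | ∀ x : K i, stoneCechUnit (⟨i, x⟩ : Σ i, K i) ∈ Z}
    let W : Set (StoneCech (Σ i, K i)) := F ⁻¹' {u | S ∈ u}
    have hW : IsClopen W :=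
      IsClopen.preimage ⟨ultrafilter_isClosed_basic S, ultrafilter_isOpen_basic S⟩ hc
    have key : ∀ p : Σ i, K i, stoneCechUnit p ∈ Z ↔ stoneCechUnit p ∈ W := by
      rintro ⟨i, x⟩
      have h1 : stoneCechUnit (⟨i, x⟩ : Σ i, K i) ∈ W ↔ i ∈ S := by
        change S ∈ F (stoneCechUnit ⟨i, x⟩) ↔ _
        rw [hu]
        exact Ultrafilter.mem_pure
      rw [h1]
      refine ⟨fun hx => ?_, fun h => h x⟩
      have hcl : IsClopen ((fun y : K i => stoneCechUnit (⟨i, y⟩ : Σ i, K i)) ⁻¹' Z) :=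
        hZ.preimage (continuous_stoneCechUnit.comp continuous_sigmaMk)
      have := hcl.eq_univ ⟨x, hx⟩
      exact fun y => (Set.eq_univ_iff_forall.mp this) y
    have hD : ∀ c, c ∈ symmDiff Z W → False := by
      intro c hcD
      have ho : IsOpen (symmDiff Z W) :=
        (hZ.isOpen.sdiff hW.isClosed).union (hW.isOpen.sdiff hZ.isClosed)
      obtain ⟨p, hp⟩ := denseRange_stoneCechUnit.exists_mem_open ho ⟨c, hcD⟩
      have := key p
      rw [Set.mem_symmDiff] at hp
      tauto
    have hiff : ∀ c, c ∈ Z ↔ c ∈ W := by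
      intro c
      have := hD c
      rw [Set.mem_symmDiff] at this
      tauto
    have haW : S ∈ F a := (hiff a).1 haZ
    refine (hiff b).2 ?_
    change S ∈ F b
    rw [hb']
    exact haW
end

section
/- Let E be a type with the discrete topology, X := E × unitInterval, and let F : StoneCech X → Ultrafilter E be the continuous extension (stoneCechExtend) of the map p ↦ pure p.1. Let U be a free ultrafilter on E (i.e. U ≠ pure e for every e : E), let 0_U (respectively 1_U) be the unique point of StoneCech X to which the family fun e => stoneCechUnit (e, 0) (respectively fun e => stoneCechUnit (e, 1)) converges along U, and set 𝕀_U := F ⁻¹' {U}. Then each of the three sets 𝕀_U \ {0_U}, 𝕀_U \ {1_U}, and 𝕀_U \ {0_U, 1_U} is a connected subset of StoneCech X. -/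
open Filter Topology

namespace NSI

variable {E : Type*} [TopologicalSpace E] [DiscreteTopology E]

theorem cont_pure : Continuous fun p : E × unitInterval => (pure p.1 : Ultrafilter E) :=
  continuous_of_discreteTopology.comp continuous_fst

/-- The extended projection. -/
noncomputable def F : StoneCech (E × unitInterval) → Ultrafilter E :=
  stoneCechExtend (cont_pure (E := E))

theorem F_cont : Continuous (F (E := E)) := continuous_stoneCechExtend _

theorem F_unit (p : E × unitInterval) : F (stoneCechUnit p) = pure p.1 :=
  stoneCechExtend_stoneCechUnit _ p

theorem cont_fam {Y : Type*} [TopologicalSpace Y] (h : E → C(unitInterval, Y)) :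
    Continuous fun p : E × unitInterval => h p.1 p.2 :=
  continuous_prod_of_discrete_left.2 fun e => (h e).continuous

theorem cont_psi (c : E → C(unitInterval, unitInterval)) :
    Continuous fun p : E × unitInterval =>
      (stoneCechUnit (p.1, c p.1 p.2) : StoneCech (E × unitInterval)) :=
  continuous_stoneCechUnit.comp (continuous_fst.prodMk (cont_fam c))

/-- Extension of a fibrewise self-map. -/
noncomputable def psi (c : E → C(unitInterval, unitInterval)) :
    StoneCech (E × unitInterval) → StoneCech (E × unitInterval) :=
  stoneCechExtend (cont_psi c)

theorem psi_cont (c : E → C(unitInterval, unitInterval)) : Continuous (psi c) :=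
  continuous_stoneCechExtend _

theorem psi_unit (c : E → C(unitInterval, unitInterval)) (p : E × unitInterval) :
    psi c (stoneCechUnit p) = stoneCechUnit (p.1, c p.1 p.2) :=
  stoneCechExtend_stoneCechUnit _ p

/-- Extension of a fibrewise function. -/
noncomputable def H (c : E → C(unitInterval, unitInterval)) :
    StoneCech (E × unitInterval) → unitInterval :=
  stoneCechExtend (cont_fam c)

theorem H_cont (c : E → C(unitInterval, unitInterval)) : Continuous (H c) :=
  continuous_stoneCechExtend _

theorem H_unit (c : E → C(unitInterval, unitInterval)) (p : E × unitInterval) :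
    H c (stoneCechUnit p) = c p.1 p.2 :=
  stoneCechExtend_stoneCechUnit _ p

theorem F_psi (c : E → C(unitInterval, unitInterval)) (x) : F (psi c x) = F x := by
  have : F ∘ psi c = F (E := E) := by
    apply stoneCech_hom_ext (F_cont.comp (psi_cont c)) F_cont
    ext1 p
    simp only [Function.comp, psi_unit, F_unit]
  exact congrFun this x

theorem H_psi (h c : E → C(unitInterval, unitInterval)) (v : unitInterval)
    (hv : ∀ e t, h e (c e t) = v) (x) : H h (psi c x) = v := by
  have : H h ∘ psi c = fun _ => v := by
    apply stoneCech_hom_ext ((H_cont h).comp (psi_cont c)) continuous_const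
    ext1 p
    simp only [Function.comp, psi_unit, H_unit, hv]
  exact congrFun this x

theorem psi_psi (c d : E → C(unitInterval, unitInterval)) (x) :
    psi c (psi d x) = psi (fun e => (c e).comp (d e)) x := by
  have : psi c ∘ psi d = psi (fun e => (c e).comp (d e)) := by
    apply stoneCech_hom_ext ((psi_cont c).comp (psi_cont d)) (psi_cont _)
    ext1 p
    simp only [Function.comp, psi_unit, ContinuousMap.comp_apply]
  exact congrFun this x

theorem key {U : Ultrafilter E} {x : StoneCech (E × unitInterval)} (hx : F x = U)
    {T : Set E} (hT : T ∈ U) {N : Set (StoneCech (E × unitInterval))} (hN : N ∈ 𝓝 x) :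
    ∃ e t, e ∈ T ∧ stoneCechUnit (e, t) ∈ N := by
  have h1 : F ⁻¹' {V : Ultrafilter E | T ∈ V} ∈ 𝓝 x :=
    ((ultrafilter_isOpen_basic T).preimage F_cont).mem_nhds (by
      change T ∈ F x
      rwa [hx])
  obtain ⟨y, hy, p, rfl⟩ := mem_closure_iff_nhds.1
    (denseRange_stoneCechUnit x) _ (inter_mem hN h1)
  refine ⟨p.1, p.2, ?_, hy.1⟩
  have := hy.2
  simpa [F_unit] using this

theorem lim_F {U : Ultrafilter E} {z} {p : unitInterval}
    (hz : Tendsto (fun e : E => stoneCechUnit (e, p)) ↑U (𝓝 z)) : F z = U := by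
  have h1 := (F_cont.tendsto z).comp hz
  have h2 : (F ∘ fun e : E => stoneCechUnit (e, p)) = pure := by
    ext1 e
    simp [F_unit]
  rw [h2] at h1
  exact tendsto_nhds_unique h1 U.tendsto_pure_self

theorem lim_psi {U : Ultrafilter E} {z} {p : unitInterval}
    (hz : Tendsto (fun e : E => stoneCechUnit (e, p)) ↑U (𝓝 z))
    (c : E → C(unitInterval, unitInterval)) (hc : ∀ e, c e p = p) : psi c z = z := by
  have h1 := ((psi_cont c).tendsto z).comp hz
  have h2 : (psi c ∘ fun e : E => stoneCechUnit (e, p)) = fun e : E => stoneCechUnit (e, p) := by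
    ext1 e
    simp [psi_unit, hc]
  rw [h2] at h1
  exact tendsto_nhds_unique h1 hz

theorem lim_H {U : Ultrafilter E} {z} {p : unitInterval}
    (hz : Tendsto (fun e : E => stoneCechUnit (e, p)) ↑U (𝓝 z))
    (c : E → C(unitInterval, unitInterval)) (v : unitInterval) (hc : ∀ e, c e p = v) :
    H c z = v := by
  have h1 := ((H_cont c).tendsto z).comp hz
  have h2 : (H c ∘ fun e : E => stoneCechUnit (e, p)) = fun _ => v := by
    ext1 e
    simp [H_unit, hc]
  rw [h2] at h1
  exact tendsto_nhds_unique h1 tendsto_const_nhds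

theorem fibre_preconn (U : Ultrafilter E) :
    IsPreconnected (F ⁻¹' {U} : Set (StoneCech (E × unitInterval))) := by
  have hcl : IsClosed (F ⁻¹' {U} : Set (StoneCech (E × unitInterval))) :=
    isClosed_singleton.preimage F_cont
  rw [isPreconnected_closed_iff]
  rintro A B hA hB hAB ⟨x, hx, hxA⟩ ⟨y, hy, hyB⟩
  by_contra hne
  rw [Set.not_nonempty_iff_eq_empty] at hne
  obtain ⟨g, g0, g1, -⟩ := exists_continuous_zero_one_of_isClosed (hcl.inter hA) (hcl.inter hB) (by
    rw [Set.disjoint_iff]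
    rintro z ⟨⟨hz, hzA⟩, -, hzB⟩
    rw [← hne]
    exact ⟨hz, hzA, hzB⟩)
  have hK : IsClosed (F '' (g ⁻¹' {(1/2 : ℝ)}) : Set (Ultrafilter E)) :=
    ((isClosed_singleton.preimage g.continuous).isCompact.image F_cont).isClosed
  have hUK : U ∉ (F '' (g ⁻¹' {(1/2 : ℝ)}) : Set (Ultrafilter E)) := by
    rintro ⟨z, hz, hzU⟩
    have hz : g z = 1/2 := hz
    rcases hAB hzU with h | h
    · have := g0 ⟨hzU, h⟩
      norm_num [hz] at this
    · have := g1 ⟨hzU, h⟩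
      norm_num [hz] at this
  have hev : ∀ᶠ e in (U : Filter E), ∀ t, g (stoneCechUnit (e, t)) ≠ 1/2 := by
    have := U.tendsto_pure_self.eventually (hK.isOpen_compl.mem_nhds hUK)
    filter_upwards [this] with e he t ht
    exact he ⟨_, ht, F_unit _⟩
  have hgc : ∀ e : E, Continuous fun t : unitInterval => g (stoneCechUnit (e, t)) := fun e =>
    g.continuous.comp (continuous_stoneCechUnit.comp (by fun_prop))
  have hgx : g x = 0 := g0 ⟨hx, hxA⟩
  have hgy : g y = 1 := g1 ⟨hy, hyB⟩
  rcases U.em (fun e => g (stoneCechUnit (e, 0)) < 1/2) with h | h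
  · obtain ⟨e, t, he, ht⟩ := key hy (h.and hev)
      ((isOpen_lt continuous_const g.continuous).mem_nhds (by
        change (1/2 : ℝ) < g y
        rw [hgy]; norm_num))
    obtain ⟨s, hs⟩ := mem_range_of_exists_le_of_exists_ge (hgc e) ⟨0, he.1.le⟩ ⟨t, le_of_lt ht⟩
    exact he.2 s hs
  · obtain ⟨e, t, he, ht⟩ := key hx (h.and hev)
      ((isOpen_lt g.continuous continuous_const).mem_nhds (by
        change g x < (1/2 : ℝ)
        rw [hgx]; norm_num))
    obtain ⟨s, hs⟩ := mem_range_of_exists_le_of_exists_ge (hgc e) ⟨t, le_of_lt ht⟩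
      ⟨0, not_lt.1 he.1⟩
    exact he.2 s hs

/-- midpoint -/
noncomputable def half : unitInterval := ⟨1/2, by norm_num, by norm_num⟩

theorem conn_of {U : Ultrafilter E} {m : StoneCech (E × unitInterval)}
    (hm : Tendsto (fun e : E => stoneCechUnit (e, half)) ↑U (𝓝 m))
    (S : Set (StoneCech (E × unitInterval))) (hmS : m ∉ S)
    (h : ∀ x, F x = U → x ∉ S → ∃ c : E → C(unitInterval, unitInterval),
      (∀ e, c e half = half) ∧ psi c x = x ∧ ∀ y, psi c y ∉ S) :
    IsConnected (F ⁻¹' {U} \ S) := by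
  refine ⟨⟨m, lim_F hm, hmS⟩, isPreconnected_of_forall m ?_⟩
  rintro x ⟨hx, hxS⟩
  obtain ⟨c, hc, hcx, hcS⟩ := h x hx hxS
  refine ⟨psi c '' (F ⁻¹' {U}), ?_, ⟨m, lim_F hm, lim_psi hm c hc⟩, ⟨x, hx, hcx⟩,
    (fibre_preconn U).image _ (psi_cont c).continuousOn⟩
  rintro _ ⟨y, hy, rfl⟩
  exact ⟨(F_psi c y).trans hy, hcS y⟩

theorem sep {U : Ultrafilter E} {x z : StoneCech (E × unitInterval)} {p : unitInterval}
    (hz : Tendsto (fun e : E => stoneCechUnit (e, p)) ↑U (𝓝 z)) (hx : F x = U) (hne : x ≠ z) :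
    ∃ N : E → Set unitInterval, (∀ e, N e ∈ 𝓝 p) ∧
      ∀ c : E → C(unitInterval, unitInterval), (∀ e, ∀ t ∉ N e, c e t = t) → psi c x = x := by
  obtain ⟨V, W, hV, hW, hxV, hzW, hVW⟩ := t2_separation hne
  have hT : ∀ᶠ e in (U : Filter E), stoneCechUnit (e, p) ∈ W := hz (hW.mem_nhds hzW)
  refine ⟨fun e => {t | stoneCechUnit (e, p) ∈ W → stoneCechUnit (e, t) ∈ W}, ?_, ?_⟩
  · intro e
    by_cases he : stoneCechUnit (e, p) ∈ W
    · have hc : Continuous fun t : unitInterval => stoneCechUnit (e, t) :=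
        continuous_stoneCechUnit.comp (by fun_prop)
      filter_upwards [(hW.preimage hc).mem_nhds he] with t ht _ using ht
    · simp [he]
  · intro c hc
    by_contra hcx
    have hO : {y | psi c y ≠ y} ∈ 𝓝 x :=
      (isOpen_ne_fun (psi_cont c) continuous_id).mem_nhds hcx
    obtain ⟨e, t, he, htV, ht⟩ := key hx hT (inter_mem (hV.mem_nhds hxV) hO)
    apply ht
    rw [psi_unit]
    have : c e t = t := hc e t fun h => Set.disjoint_left.1 hVW htV (h he)
    simp [this]

theorem half_pos : (0 : unitInterval) < half := by
  rw [← Subtype.coe_lt_coe]; norm_num [half]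

theorem half_lt_one : half < (1 : unitInterval) := by
  rw [← Subtype.coe_lt_coe]; norm_num [half]

/-- clamp from below -/
def up (a : E → unitInterval) (e : E) : C(unitInterval, unitInterval) :=
  ⟨fun t => max t (a e), by fun_prop⟩

/-- clamp from above -/
def dn (a : E → unitInterval) (e : E) : C(unitInterval, unitInterval) :=
  ⟨fun t => min t (a e), by fun_prop⟩

theorem sep0 {U : Ultrafilter E} {x z : StoneCech (E × unitInterval)}
    (hz : Tendsto (fun e : E => stoneCechUnit (e, (0 : unitInterval))) ↑U (𝓝 z))
    (hx : F x = U) (hne : x ≠ z) :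
    ∃ a : E → unitInterval, (∀ e, 0 < a e) ∧ (∀ e, a e ≤ half) ∧ psi (up a) x = x := by
  obtain ⟨N, hN, h⟩ := sep hz hx hne
  have : ∀ e, ∃ a : unitInterval, 0 < a ∧ Set.Ico 0 a ⊆ N e := fun e => by
    obtain ⟨u, hu, hu'⟩ := exists_Ico_subset_of_mem_nhds (hN e) ⟨1, zero_lt_one⟩
    exact ⟨u, hu, hu'⟩
  choose a ha haN using this
  refine ⟨fun e => min (a e) half, fun e => lt_min (ha e) half_pos, fun e => min_le_right _ _,
    h _ fun e t ht => ?_⟩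
  apply max_eq_left
  by_contra hlt
  exact ht (haN e ⟨unitInterval.nonneg', (not_le.1 hlt).trans_le (min_le_left _ _)⟩)

theorem sep1 {U : Ultrafilter E} {x z : StoneCech (E × unitInterval)}
    (hz : Tendsto (fun e : E => stoneCechUnit (e, (1 : unitInterval))) ↑U (𝓝 z))
    (hx : F x = U) (hne : x ≠ z) :
    ∃ b : E → unitInterval, (∀ e, b e < 1) ∧ (∀ e, half ≤ b e) ∧ psi (dn b) x = x := by
  obtain ⟨N, hN, h⟩ := sep hz hx hne
  have : ∀ e, ∃ a : unitInterval, a < 1 ∧ Set.Ioc a 1 ⊆ N e := fun e => by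
    obtain ⟨u, hu, hu'⟩ := exists_Ioc_subset_of_mem_nhds (hN e) ⟨0, zero_lt_one⟩
    exact ⟨u, hu, hu'⟩
  choose a ha haN using this
  refine ⟨fun e => max (a e) half, fun e => max_lt (ha e) half_lt_one, fun e => le_max_right _ _,
    h _ fun e t ht => ?_⟩
  apply min_eq_left
  by_contra hlt
  exact ht (haN e ⟨(le_max_left _ _).trans_lt (not_le.1 hlt), unitInterval.le_one'⟩)

theorem avoid0 {U : Ultrafilter E} {z : StoneCech (E × unitInterval)}
    (hz : Tendsto (fun e : E => stoneCechUnit (e, (0 : unitInterval))) ↑U (𝓝 z))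
    (a : E → unitInterval) (ha : ∀ e, 0 < a e) (c : E → C(unitInterval, unitInterval))
    (hc : ∀ e t, a e ≤ c e t) (y) : psi c y ≠ z := by
  intro hy
  let h : E → C(unitInterval, unitInterval) := fun e =>
    ⟨fun t => Set.projIcc (0 : ℝ) 1 zero_le_one ((t : ℝ) / (a e : ℝ)),
      continuous_projIcc.comp (by fun_prop)⟩
  have h0 : H h z = 0 := lim_H hz h 0 fun e => by
    simp [h]
  have h1 : H h (psi c y) = 1 := H_psi h c 1 (fun e t => by
    refine Set.projIcc_of_right_le zero_le_one ?_
    rw [le_div_iff₀ (by exact_mod_cast ha e), one_mul]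
    exact_mod_cast hc e t) y
  rw [hy, h0] at h1
  exact zero_ne_one h1

theorem avoid1 {U : Ultrafilter E} {z : StoneCech (E × unitInterval)}
    (hz : Tendsto (fun e : E => stoneCechUnit (e, (1 : unitInterval))) ↑U (𝓝 z))
    (b : E → unitInterval) (hb : ∀ e, b e < 1) (c : E → C(unitInterval, unitInterval))
    (hc : ∀ e t, c e t ≤ b e) (y) : psi c y ≠ z := by
  intro hy
  let h : E → C(unitInterval, unitInterval) := fun e =>
    ⟨fun t => Set.projIcc (0 : ℝ) 1 zero_le_one ((1 - (t : ℝ)) / (1 - (b e : ℝ))),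
      continuous_projIcc.comp (by fun_prop)⟩
  have h0 : H h z = 0 := lim_H hz h 0 fun e => by
    simp [h]
  have h1 : H h (psi c y) = 1 := H_psi h c 1 (fun e t => by
    refine Set.projIcc_of_right_le zero_le_one ?_
    have h2 : (b e : ℝ) < 1 := by exact_mod_cast hb e
    have h3 : (c e t : ℝ) ≤ b e := by exact_mod_cast hc e t
    rw [le_div_iff₀ (by linarith)]
    linarith) y
  rw [hy, h0] at h1
  exact zero_ne_one h1

end NSI


/-- Removing one or both endpoints `0_U`, `1_U` from a non-standard interval
`𝕀_U ⊆ β(E × 𝕀)` (the fibre over a free ultrafilter `U` of the Stone-Čech extension of the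
projection) leaves a connected set: each of `𝕀_U \ {0_U}`, `𝕀_U \ {1_U}` and
`𝕀_U \ {0_U, 1_U}` is connected. -/
theorem nonstandard_interval_remove_endpoints_connected
    {E : Type*} [TopologicalSpace E] [DiscreteTopology E]
    (U : Ultrafilter E) (hU : ∀ e : E, U ≠ pure e)
    (zeroU oneU : StoneCech (E × unitInterval))
    (hzero : Filter.Tendsto (fun e : E => stoneCechUnit (e, (0 : unitInterval)))
      ↑U (𝓝 zeroU))
    (hone : Filter.Tendsto (fun e : E => stoneCechUnit (e, (1 : unitInterval)))
      ↑U (𝓝 oneU)) :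
    IsConnected
        ((stoneCechExtend (continuous_of_discreteTopology.comp continuous_fst :
            Continuous fun p : E × unitInterval => (pure p.1 : Ultrafilter E)) ⁻¹' {U})
          \ {zeroU}) ∧
      IsConnected
        ((stoneCechExtend (continuous_of_discreteTopology.comp continuous_fst :
            Continuous fun p : E × unitInterval => (pure p.1 : Ultrafilter E)) ⁻¹' {U})
          \ {oneU}) ∧
      IsConnected
        ((stoneCechExtend (continuous_of_discreteTopology.comp continuous_fst :
            Continuous fun p : E × unitInterval => (pure p.1 : Ultrafilter E)) ⁻¹' {U})
          \ {zeroU, oneU}) := by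
  obtain ⟨m, hm⟩ : ∃ m : StoneCech (E × unitInterval),
      Tendsto (fun e : E => stoneCechUnit (e, NSI.half)) ↑U (𝓝 m) :=
    ⟨_, ultrafilter_extend_eq_iff.1 rfl⟩
  let pr : E → C(unitInterval, unitInterval) := fun _ => ContinuousMap.id _
  have hm0 : m ≠ zeroU := by
    intro h
    have h1 := NSI.lim_H hm pr NSI.half fun e => rfl
    have h2 := NSI.lim_H hzero pr 0 fun e => rfl
    rw [h, h2] at h1
    exact NSI.half_pos.ne h1
  have hm1 : m ≠ oneU := by
    intro h
    have h1 := NSI.lim_H hm pr NSI.half fun e => rfl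
    have h2 := NSI.lim_H hone pr 1 fun e => rfl
    rw [h, h2] at h1
    exact NSI.half_lt_one.ne h1.symm
  refine ⟨NSI.conn_of hm {zeroU} hm0 ?_, NSI.conn_of hm {oneU} hm1 ?_,
    NSI.conn_of hm {zeroU, oneU} (by simp [hm0, hm1]) ?_⟩
  · intro x hx hxS
    obtain ⟨a, ha, ha', hax⟩ := NSI.sep0 hzero hx hxS
    exact ⟨NSI.up a, fun e => max_eq_left (ha' e), hax, fun y =>
      NSI.avoid0 hzero a ha _ (fun e t => le_max_right _ _) y⟩
  · intro x hx hxS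
    obtain ⟨b, hb, hb', hbx⟩ := NSI.sep1 hone hx hxS
    exact ⟨NSI.dn b, fun e => min_eq_left (hb' e), hbx, fun y =>
      NSI.avoid1 hone b hb _ (fun e t => min_le_right _ _) y⟩
  · intro x hx hxS
    simp only [Set.mem_insert_iff, Set.mem_singleton_iff, not_or] at hxS
    obtain ⟨a, ha, ha', hax⟩ := NSI.sep0 hzero hx hxS.1
    obtain ⟨b, hb, hb', hbx⟩ := NSI.sep1 hone hx hxS.2
    refine ⟨fun e => (NSI.dn b e).comp (NSI.up a e), fun e => ?_, ?_, fun y => ?_⟩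
    · change min (max NSI.half (a e)) (b e) = NSI.half
      rw [max_eq_left (ha' e), min_eq_left (hb' e)]
    · rw [← NSI.psi_psi, hax, hbx]
    · simp only [Set.mem_insert_iff, Set.mem_singleton_iff, not_or]
      exact ⟨NSI.avoid0 hzero a ha _
        (fun e t => le_min (le_max_right _ _) ((ha' e).trans (hb' e))) y,
        NSI.avoid1 hone b hb _ (fun e t => min_le_right _ _) y⟩
end

section
/- Let X be a normal Hausdorff space and V ⊆ X a closed subset carrying the discrete subspace topology. Let s be an equivalence relation on X such that any two distinct related points both lie in V (i.e. s.Rel x y implies x = y or (x ∈ V ∧ y ∈ V)). Then the quotient space Quotient s is again a normal Hausdorff space. -/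
/-- Let `X` be a normal Hausdorff space and `V ⊆ X` a closed discrete subset. If `s` is an
equivalence relation on `X` all of whose nontrivial identifications happen inside `V`, then
the quotient `X/s` is again a normal Hausdorff space. -/
theorem quotient_normal_of_rel_subset_closed_discrete
    {X : Type*} [TopologicalSpace X] [T4Space X]
    (V : Set X) (hVclosed : IsClosed V) (hVdiscrete : DiscreteTopology V)
    (s : Setoid X) (hs : ∀ x y : X, s.r x y → x = y ∨ (x ∈ V ∧ y ∈ V)) :
    T4Space (Quotient s) := by
  have hsub : ∀ W : Set X, W ⊆ V → IsClosed W := by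
    intro W hW
    have h := hVclosed.isClosedEmbedding_subtypeVal.isClosedMap
      (Subtype.val ⁻¹' W : Set V) (isClosed_discrete _)
    rwa [Subtype.image_preimage_coe, Set.inter_eq_right.mpr hW] at h
  let p : X → Quotient s := fun x => Quotient.mk s x
  have hq : Topology.IsQuotientMap p := isQuotientMap_quot_mk
  have hcl : IsClosedMap p := by
    intro C hC
    rw [← hq.isClosed_preimage]
    have he : p ⁻¹' (p '' C) = C ∪ ((p ⁻¹' (p '' C)) ∩ V) := by
      ext x
      constructor
      · intro hx
        obtain ⟨y, hy, hyx⟩ := hx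
        rcases hs y x (Quotient.exact hyx) with h | h
        · exact Or.inl (h ▸ hy)
        · exact Or.inr ⟨⟨y, hy, hyx⟩, h.2⟩
      · rintro (h | h)
        · exact ⟨x, h, rfl⟩
        · exact h.1
    rw [he]
    exact hC.union (hsub _ Set.inter_subset_right)
  have h1 : T1Space (Quotient s) := by
    refine ⟨fun a => ?_⟩
    obtain ⟨x, rfl⟩ := hq.surjective a
    have h := hcl _ (isClosed_singleton (x := x))
    rwa [Set.image_singleton] at h
  have hn : NormalSpace (Quotient s) := by
    refine ⟨fun A B hA hB hAB => ?_⟩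
    obtain ⟨U, U', hU, hU', hAU, hBU, hd⟩ := normal_separation
      (hA.preimage hq.continuous) (hB.preimage hq.continuous) (hAB.preimage p)
    refine ⟨(p '' Uᶜ)ᶜ, (p '' U'ᶜ)ᶜ, (hcl _ hU.isClosed_compl).isOpen_compl,
      (hcl _ hU'.isClosed_compl).isOpen_compl, ?_, ?_, ?_⟩
    · rintro a ha ⟨x, hx, rfl⟩
      exact hx (hAU ha)
    · rintro a ha ⟨x, hx, rfl⟩
      exact hx (hBU ha)
    · rw [Set.disjoint_left]
      intro a ha hb
      obtain ⟨x, rfl⟩ := hq.surjective a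
      have hx : x ∈ U := by
        by_contra h
        exact ha ⟨x, h, rfl⟩
      have hx' : x ∈ U' := by
        by_contra h
        exact hb ⟨x, h, rfl⟩
      exact Set.disjoint_left.mp hd hx hx'
  exact {}
end

section
/- Let X be a normal Hausdorff space, I a type, and V : I → Set X a family of nonempty pairwise disjoint subsets whose union W := ⋃ i, V i is closed in X and carries the discrete subspace topology. Let s be the equivalence relation on X relating x and y iff x = y or x and y lie in a common V i, let q : X → Quotient s be the quotient map, and for an ultrafilter U on I set V_U := ⋂_{J ∈ U} closure (stoneCechUnit '' ⋃_{i ∈ J} V i) ⊆ StoneCech X. Then Quotient s is a normal Hausdorff space, and the continuous extension Q : StoneCech X → StoneCech (Quotient s) of stoneCechUnit ∘ q is a surjection satisfying: for all a, b : StoneCech X, Q a = Q b if and only if a = b or there exists an ultrafilter U on I with a ∈ V_U and b ∈ V_U. Hence β(X/∼) is the quotient of βX whose nontrivial classes are the sets V_U, one for each ultrafilter U on I. -/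
open Topology Filter in
theorem scq_closed {X : Type*} [TopologicalSpace X] {W : Set X} (hW : IsClosed W)
    (hd : DiscreteTopology W) {A : Set X} (hA : A ⊆ W) : IsClosed A := by
  have h := hW.isClosedEmbedding_subtypeVal.isClosedMap _ (isClosed_discrete (Subtype.val ⁻¹' A))
  rwa [Subtype.image_preimage_coe, Set.inter_eq_right.2 hA] at h

theorem scq_normal_of_closed {X Y : Type*} [TopologicalSpace X] [TopologicalSpace Y]
    [NormalSpace X] {f : X → Y} (hc : Continuous f) (hf : IsClosedMap f)
    (hs : Function.Surjective f) : NormalSpace Y := by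
  refine ⟨fun A B hA hB hAB => ?_⟩
  obtain ⟨U, U', hU, hU', hAU, hBU, hd⟩ :=
    NormalSpace.normal _ _ (hA.preimage hc) (hB.preimage hc) (hAB.preimage f)
  refine ⟨(f '' Uᶜ)ᶜ, (f '' U'ᶜ)ᶜ, (hf _ hU.isClosed_compl).isOpen_compl,
    (hf _ hU'.isClosed_compl).isOpen_compl, ?_, ?_, ?_⟩
  · rintro y hy ⟨x, hx, rfl⟩
    exact hx (hAU hy)
  · rintro y hy ⟨x, hx, rfl⟩
    exact hx (hBU hy)
  · rw [Set.disjoint_left]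
    intro y h1 h2
    obtain ⟨x, rfl⟩ := hs y
    have hx : x ∈ U := by
      by_contra h
      exact h1 ⟨x, h, rfl⟩
    have hx' : x ∈ U' := by
      by_contra h
      exact h2 ⟨x, h, rfl⟩
    exact Set.disjoint_left.1 hd hx hx'

theorem scq_t4 {X : Type*} [TopologicalSpace X] [T4Space X] {I : Type*}
    (V : I → Set X)
    (hWclosed : IsClosed (⋃ i, V i)) (hWdiscrete : DiscreteTopology (⋃ i, V i))
    (s : Setoid X) (hs : ∀ x y : X, s.r x y ↔ x = y ∨ ∃ i, x ∈ V i ∧ y ∈ V i) :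
    T4Space (Quotient s) := by
  have hcont : Continuous (Quotient.mk s) := continuous_quotient_mk'
  have hcl : IsClosedMap (Quotient.mk s) := by
    intro A hA
    have hq : Topology.IsQuotientMap (Quotient.mk s) := isQuotientMap_quotient_mk'
    rw [← hq.isClosed_preimage]
    have : Quotient.mk s ⁻¹' (Quotient.mk s '' A) =
        A ∪ {x | ∃ y ∈ A, ∃ i, y ∈ V i ∧ x ∈ V i} := by
      ext x
      constructor
      · rintro ⟨y, hy, h⟩
        rcases (hs y x).1 (Quotient.exact h) with rfl | h
        · exact Or.inl hy
        · exact Or.inr ⟨y, hy, h⟩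
      · rintro (h | ⟨y, hy, h⟩)
        · exact ⟨x, h, rfl⟩
        · exact ⟨y, hy, Quotient.sound ((hs y x).2 (Or.inr h))⟩
    rw [this]
    refine hA.union (scq_closed hWclosed hWdiscrete ?_)
    rintro x ⟨y, hy, i, h1, h2⟩
    exact Set.mem_iUnion.2 ⟨i, h2⟩
  have : NormalSpace (Quotient s) := scq_normal_of_closed hcont hcl Quotient.mk_surjective
  have : T1Space (Quotient s) := by
    refine ⟨fun y => ?_⟩
    obtain ⟨x, rfl⟩ := Quotient.mk_surjective y
    simpa using hcl _ (isClosed_singleton (x := x))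
  exact {}

theorem scq_sep {X : Type*} [TopologicalSpace X] {I : Type*}
    (V : I → Set X)
    (s : Setoid X) (hs : ∀ x y : X, s.r x y ↔ x = y ∨ ∃ i, x ∈ V i ∧ y ∈ V i)
    (Q : StoneCech X → StoneCech (Quotient s)) (hQ : Continuous Q)
    (hQu : ∀ x, Q (stoneCechUnit x) = stoneCechUnit (Quotient.mk s x))
    (g : StoneCech X → unitInterval) (hg : Continuous g)
    (hV : ∀ i, ∀ x ∈ V i, ∀ y ∈ V i, g (stoneCechUnit x) = g (stoneCechUnit y))
    {a b : StoneCech X} (hab : Q a = Q b) : g a = g b := by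
  let h : Quotient s → unitInterval := Quotient.lift (fun x => g (stoneCechUnit x)) (by
    intro x y hxy
    rcases (hs x y).1 hxy with rfl | ⟨i, h1, h2⟩
    · rfl
    · exact hV i x h1 y h2)
  have hc : Continuous h := (hg.comp continuous_stoneCechUnit).quotient_lift _
  have : g = stoneCechExtend hc ∘ Q := by
    refine stoneCech_hom_ext hg ((continuous_stoneCechExtend hc).comp hQ) ?_
    funext x
    simp only [Function.comp, hQu, stoneCechExtend_stoneCechUnit]
    rfl
  rw [this]
  simp [hab]

theorem scq_mem {X : Type*} [TopologicalSpace X] {I : Type*}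
    (V : I → Set X) {a : StoneCech X} (ha : a ∈ closure (stoneCechUnit '' ⋃ i, V i)) :
    ∃ U : Ultrafilter I, ∀ J ∈ U, a ∈ closure (stoneCechUnit '' ⋃ i ∈ J, V i) := by
  obtain ⟨F, hF, hFa⟩ := mem_closure_iff_ultrafilter.1 ha
  have hex : ∀ z : StoneCech X, z ∈ stoneCechUnit '' (⋃ i, V i) →
      ∃ i, z ∈ stoneCechUnit '' V i := by
    rintro z ⟨x, hx, rfl⟩
    obtain ⟨i, hi⟩ := Set.mem_iUnion.1 hx
    exact ⟨i, x, hi, rfl⟩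
  obtain ⟨z0, hz0⟩ := F.nonempty_of_mem hF
  obtain ⟨i0, -⟩ := hex z0 hz0
  have : ∀ z : StoneCech X, ∃ i, z ∈ stoneCechUnit '' (⋃ i, V i) → z ∈ stoneCechUnit '' V i := by
    intro z
    by_cases hz : z ∈ stoneCechUnit '' (⋃ i, V i)
    · obtain ⟨i, hi⟩ := hex z hz
      exact ⟨i, fun _ => hi⟩
    · exact ⟨i0, fun h => absurd h hz⟩
  choose k hk using this
  refine ⟨F.map k, fun J hJ => mem_closure_iff_ultrafilter.2 ⟨F, ?_, hFa⟩⟩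
  filter_upwards [hF, Ultrafilter.mem_map.1 hJ] with z hz hzJ
  obtain ⟨x, hx, rfl⟩ := hk z hz
  exact ⟨x, Set.mem_biUnion hzJ hx, rfl⟩

theorem scq_closW {X : Type*} [TopologicalSpace X] {I : Type*}
    (V : I → Set X)
    (s : Setoid X) (hs : ∀ x y : X, s.r x y ↔ x = y ∨ ∃ i, x ∈ V i ∧ y ∈ V i)
    (Q : StoneCech X → StoneCech (Quotient s)) (hQ : Continuous Q)
    (hQu : ∀ x, Q (stoneCechUnit x) = stoneCechUnit (Quotient.mk s x))
    {a b : StoneCech X} (hab : Q a = Q b) (hne : a ≠ b) :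
    a ∈ closure (stoneCechUnit '' ⋃ i, V i) := by
  by_contra ha
  obtain ⟨g, h0, h1, h2⟩ := exists_continuous_zero_one_of_isClosed
    (s := closure (stoneCechUnit '' ⋃ i, V i) ∪ {b}) (t := {a})
    (isClosed_closure.union isClosed_singleton) isClosed_singleton (by
      rw [Set.disjoint_singleton_right]
      rintro (h | h)
      · exact ha h
      · exact hne h)
  have h0' : ∀ i, ∀ x ∈ V i, g (stoneCechUnit x) = 0 := fun i x hx =>
    h0 (Or.inl (subset_closure ⟨x, Set.mem_iUnion.2 ⟨i, hx⟩, rfl⟩))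
  have := scq_sep V s hs Q hQ hQu (fun z => ⟨g z, h2 z⟩) (by fun_prop)
    (fun i x hx y hy => by
      apply Subtype.ext
      change g _ = g _
      rw [h0' i x hx, h0' i y hy]) hab
  have h3 : g a = g b := congrArg Subtype.val this
  have h4 : g a = 1 := h1 rfl
  have h5 : g b = 0 := h0 (Or.inr rfl)
  rw [h4, h5] at h3
  exact one_ne_zero h3

theorem scq_eqU {X : Type*} [TopologicalSpace X] [T4Space X] {I : Type*}
    (V : I → Set X) (hdisj : Pairwise (Function.onFun Disjoint V))
    (hWclosed : IsClosed (⋃ i, V i)) (hWdiscrete : DiscreteTopology (⋃ i, V i))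
    (s : Setoid X) (hs : ∀ x y : X, s.r x y ↔ x = y ∨ ∃ i, x ∈ V i ∧ y ∈ V i)
    (Q : StoneCech X → StoneCech (Quotient s)) (hQ : Continuous Q)
    (hQu : ∀ x, Q (stoneCechUnit x) = stoneCechUnit (Quotient.mk s x))
    {a b : StoneCech X} (hab : Q a = Q b) (J : Set I)
    (ha : a ∈ closure (stoneCechUnit '' ⋃ i ∈ J, V i))
    (hb : b ∈ closure (stoneCechUnit '' ⋃ i ∈ Jᶜ, V i)) : False := by
  have hsub : ∀ K : Set I, (⋃ i ∈ K, V i) ⊆ ⋃ i, V i := fun K =>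
    Set.iUnion₂_subset fun i _ => Set.subset_iUnion V i
  obtain ⟨g, h0, h1, h2⟩ := exists_continuous_zero_one_of_isClosed
    (scq_closed hWclosed hWdiscrete (hsub J)) (scq_closed hWclosed hWdiscrete (hsub Jᶜ)) (by
      rw [Set.disjoint_left]
      intro x hx hx'
      simp only [Set.mem_iUnion] at hx hx'
      obtain ⟨i, hi, hxi⟩ := hx
      obtain ⟨j, hj, hxj⟩ := hx'
      have hij : i ≠ j := by
        rintro rfl
        exact hj hi
      exact Set.disjoint_left.1 (hdisj hij) hxi hxj)
  have hfc : Continuous (fun x => (⟨g x, h2 x⟩ : unitInterval)) := by fun_prop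
  have key := scq_sep V s hs Q hQ hQu (stoneCechExtend hfc) (continuous_stoneCechExtend hfc)
    (fun i x hx y hy => by
      rw [stoneCechExtend_stoneCechUnit, stoneCechExtend_stoneCechUnit]
      apply Subtype.ext
      change g x = g y
      by_cases hi : i ∈ J
      · rw [h0 (Set.mem_biUnion hi hx), h0 (Set.mem_biUnion hi hy)]; rfl
      · rw [h1 (Set.mem_biUnion (s := Jᶜ) hi hx), h1 (Set.mem_biUnion (s := Jᶜ) hi hy)]; rfl) hab
  have ext1 : ∀ (A : Set X) (c : unitInterval), (∀ x ∈ A, g x = c) →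
      ∀ z ∈ closure (stoneCechUnit '' A), stoneCechExtend hfc z = c := by
    intro A c hA z hz
    have : closure (stoneCechUnit '' A) ⊆ stoneCechExtend hfc ⁻¹' {c} := by
      refine closure_minimal ?_ (isClosed_singleton.preimage (continuous_stoneCechExtend hfc))
      rintro _ ⟨x, hx, rfl⟩
      change stoneCechExtend hfc (stoneCechUnit x) = c
      rw [stoneCechExtend_stoneCechUnit]
      exact Subtype.ext (hA x hx)
    exact this hz
  rw [ext1 _ 0 (fun x hx => h0 hx) a ha, ext1 _ 1 (fun x hx => h1 hx) b hb] at key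
  exact zero_ne_one key

theorem scq_back {X : Type*} [TopologicalSpace X] {I : Type*}
    (V : I → Set X) (hne : ∀ i, (V i).Nonempty)
    (s : Setoid X) (hs : ∀ x y : X, s.r x y ↔ x = y ∨ ∃ i, x ∈ V i ∧ y ∈ V i)
    (Q : StoneCech X → StoneCech (Quotient s)) (hQ : Continuous Q)
    (hQu : ∀ x, Q (stoneCechUnit x) = stoneCechUnit (Quotient.mk s x))
    (U : Ultrafilter I) {a b : StoneCech X}
    (ha : ∀ J ∈ U, a ∈ closure (stoneCechUnit '' ⋃ i ∈ J, V i))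
    (hb : ∀ J ∈ U, b ∈ closure (stoneCechUnit '' ⋃ i ∈ J, V i)) : Q a = Q b := by
  choose v hv using hne
  have key : ∀ z : StoneCech X, (∀ J ∈ U, z ∈ closure (stoneCechUnit '' ⋃ i ∈ J, V i)) →
      ∀ A : Set (StoneCech (Quotient s)), IsOpen A → Q z ∈ A →
        {i | Q (stoneCechUnit (v i)) ∈ A} ∈ U := by
    intro z hz A hA hzA
    by_contra hn
    have h := hz _ (Ultrafilter.compl_mem_iff_notMem.2 hn)
    obtain ⟨_, hy, x, hx, rfl⟩ := mem_closure_iff.1 h _ (hA.preimage hQ) hzA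
    simp only [Set.mem_iUnion] at hx
    obtain ⟨i, hi, hxi⟩ := hx
    apply hi
    have hxy : Quotient.mk s x = Quotient.mk s (v i) :=
      Quotient.sound ((hs _ _).2 (Or.inr ⟨i, hxi, hv i⟩))
    change Q (stoneCechUnit (v i)) ∈ A
    rw [hQu, ← hxy, ← hQu]
    exact hy
  by_contra hab
  obtain ⟨A, B, hA, hB, haA, hbB, hd⟩ := t2_separation hab
  obtain ⟨i, h1, h2⟩ := U.nonempty_of_mem
    (Filter.inter_mem (key a ha A hA haA) (key b hb B hB hbB))
  exact Set.disjoint_left.1 hd h1 h2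


/-- Theorem 4.9: let `X` be normal Hausdorff, `(V i)` a family of nonempty pairwise disjoint
subsets whose union `W` is closed and discrete, and `s` the equivalence relation identifying
the points within each `V i`. Then `X/s` is normal Hausdorff and the Stone-Čech extension
`Q : βX → β(X/s)` of the quotient map is a surjection whose nontrivial fibres are exactly the
sets `V_U = ⋂_{J ∈ U} closure (stoneCechUnit '' ⋃_{i ∈ J} V i)`, one for each ultrafilter `U`
on `I`. Hence `β(X/s) = (βX)/∼_β`. -/
theorem stoneCech_quotient_classes
    {X : Type*} [TopologicalSpace X] [T4Space X] {I : Type*}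
    (V : I → Set X) (hne : ∀ i, (V i).Nonempty)
    (hdisj : Pairwise (Function.onFun Disjoint V))
    (hWclosed : IsClosed (⋃ i, V i)) (hWdiscrete : DiscreteTopology (⋃ i, V i))
    (s : Setoid X) (hs : ∀ x y : X, s.r x y ↔ x = y ∨ ∃ i, x ∈ V i ∧ y ∈ V i) :
    T4Space (Quotient s) ∧
      Function.Surjective
        (stoneCechExtend (continuous_stoneCechUnit.comp continuous_quotient_mk' :
          Continuous fun x : X => stoneCechUnit (Quotient.mk s x))) ∧
      ∀ a b : StoneCech X,
        stoneCechExtend (continuous_stoneCechUnit.comp continuous_quotient_mk' :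
            Continuous fun x : X => stoneCechUnit (Quotient.mk s x)) a =
          stoneCechExtend (continuous_stoneCechUnit.comp continuous_quotient_mk' :
            Continuous fun x : X => stoneCechUnit (Quotient.mk s x)) b ↔
        a = b ∨ ∃ U : Ultrafilter I,
          (a ∈ ⋂ (J : Set I) (_ : J ∈ U), closure (stoneCechUnit '' ⋃ i ∈ J, V i)) ∧
          (b ∈ ⋂ (J : Set I) (_ : J ∈ U), closure (stoneCechUnit '' ⋃ i ∈ J, V i)) := by
  have hc : Continuous fun x : X => stoneCechUnit (Quotient.mk s x) :=
    continuous_stoneCechUnit.comp continuous_quotient_mk'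
  have hQ := continuous_stoneCechExtend hc
  have hQu : ∀ x, stoneCechExtend hc (stoneCechUnit x) = stoneCechUnit (Quotient.mk s x) :=
    fun x => stoneCechExtend_stoneCechUnit hc x
  refine ⟨scq_t4 V hWclosed hWdiscrete s hs, ?_, fun a b => ⟨fun hab => ?_, ?_⟩⟩
  · have hd : DenseRange (stoneCechExtend hc) := by
      refine Dense.mono ?_ (denseRange_stoneCechUnit (α := Quotient s))
      rintro _ ⟨y, rfl⟩
      obtain ⟨x, rfl⟩ := Quotient.mk_surjective y
      exact ⟨_, hQu x⟩
    rw [← Set.range_eq_univ]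
    exact (isCompact_range hQ).isClosed.closure_eq ▸ hd.closure_range
  · by_cases hne' : a = b
    · exact Or.inl hne'
    right
    obtain ⟨U, hU⟩ := scq_mem V (scq_closW V s hs _ hQ hQu hab hne')
    obtain ⟨U', hU'⟩ := scq_mem V (scq_closW V s hs _ hQ hQu hab.symm (Ne.symm hne'))
    have hUU : U = U' := by
      refine Ultrafilter.coe_le_coe.1 fun J hJ => ?_
      by_contra hn
      have hn' : Jᶜ ∈ U := Ultrafilter.compl_mem_iff_notMem.2 hn
      exact scq_eqU V hdisj hWclosed hWdiscrete s hs _ hQ hQu hab.symm J (hU' J hJ) (hU _ hn')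
    subst hUU
    exact ⟨U, Set.mem_iInter₂.2 hU, Set.mem_iInter₂.2 hU'⟩
  · rintro (rfl | ⟨U, ha, hb⟩)
    · rfl
    · exact scq_back V hne s hs _ hQ hQu U (Set.mem_iInter₂.1 ha) (Set.mem_iInter₂.1 hb)
end

section
/- Let X be a normal Hausdorff space and V ⊆ X a nonempty closed subset carrying the discrete subspace topology. Let s be the equivalence relation on X relating x and y iff x = y or both x, y ∈ V, and let q : X → Quotient s be the quotient map collapsing V to a single point. Then Quotient s is a normal Hausdorff space, and the continuous extension Q : StoneCech X → StoneCech (Quotient s) of stoneCechUnit ∘ q is a surjection satisfying: for all a, b : StoneCech X, Q a = Q b if and only if a = b or both a and b lie in closure (stoneCechUnit '' V). Hence β(X/V) is the quotient of βX collapsing the closure of V to a point. -/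
/-- Corollary 4.10: let `X` be normal Hausdorff and `V ⊆ X` a nonempty closed discrete subset,
and let `s` be the equivalence relation collapsing `V` to a single point. Then `X/V` is normal
Hausdorff and the Stone-Čech extension `Q : βX → β(X/V)` of the quotient map is a surjection
identifying exactly the points of `closure (stoneCechUnit '' V)`; hence
`β(X/V) = βX / closure(stoneCechUnit '' V)`. -/
theorem stoneCech_quotient_collapse_closed_discrete
    {X : Type*} [TopologicalSpace X] [T4Space X]
    (V : Set X) (hne : V.Nonempty) (hVclosed : IsClosed V) (hVdiscrete : DiscreteTopology V)
    (s : Setoid X) (hs : ∀ x y : X, s.r x y ↔ x = y ∨ (x ∈ V ∧ y ∈ V)) :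
    T4Space (Quotient s) ∧
      Function.Surjective
        (stoneCechExtend (continuous_stoneCechUnit.comp continuous_quotient_mk' :
          Continuous fun x : X => stoneCechUnit (Quotient.mk s x))) ∧
      ∀ a b : StoneCech X,
        stoneCechExtend (continuous_stoneCechUnit.comp continuous_quotient_mk' :
            Continuous fun x : X => stoneCechUnit (Quotient.mk s x)) a =
          stoneCechExtend (continuous_stoneCechUnit.comp continuous_quotient_mk' :
            Continuous fun x : X => stoneCechUnit (Quotient.mk s x)) b ↔
        a = b ∨ (a ∈ closure (stoneCechUnit '' V) ∧ b ∈ closure (stoneCechUnit '' V)) := by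
  have hmk : ∀ x y : X, Quotient.mk s x = Quotient.mk s y ↔ x = y ∨ (x ∈ V ∧ y ∈ V) :=
    fun x y => Quotient.eq.trans (hs x y)
  have hqc : Continuous (Quotient.mk s) := continuous_quotient_mk'
  have hqs : Function.Surjective (Quotient.mk s) := Quotient.mk_surjective
  have hqm : Topology.IsQuotientMap (Quotient.mk s) := isQuotientMap_quotient_mk'
  have hcl : IsClosedMap (Quotient.mk s) := by
    intro C hC
    rw [← hqm.isClosed_preimage]
    by_cases h : (C ∩ V).Nonempty
    · obtain ⟨c, hcC, hcV⟩ := h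
      have : Quotient.mk s ⁻¹' (Quotient.mk s '' C) = C ∪ V := by
        ext x
        simp only [Set.mem_preimage, Set.mem_image, hmk, Set.mem_union]
        constructor
        · rintro ⟨y, hy, rfl | h⟩
          · exact Or.inl hy
          · exact Or.inr h.2
        · rintro (h | h)
          · exact ⟨x, h, Or.inl rfl⟩
          · exact ⟨c, hcC, Or.inr ⟨hcV, h⟩⟩
      rw [this]
      exact hC.union hVclosed
    · have : Quotient.mk s ⁻¹' (Quotient.mk s '' C) = C := by
        ext x
        simp only [Set.mem_preimage, Set.mem_image, hmk]
        constructor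
        · rintro ⟨y, hy, rfl | h'⟩
          · exact hy
          · exact absurd ⟨y, hy, h'.1⟩ h
        · exact fun h => ⟨x, h, Or.inl rfl⟩
      rw [this]
      exact hC
  have hT1 : T1Space (Quotient s) := by
    refine ⟨fun z => ?_⟩
    obtain ⟨x, rfl⟩ := hqs z
    simpa using hcl {x} isClosed_singleton
  have hN : NormalSpace (Quotient s) := by
    refine ⟨fun A B hA hB hAB => ?_⟩
    obtain ⟨U, W, hU, hW, hAU, hBW, hUW⟩ := normal_separation (hA.preimage hqc)
      (hB.preimage hqc) (hAB.preimage _)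
    refine ⟨(Quotient.mk s '' Uᶜ)ᶜ, (Quotient.mk s '' Wᶜ)ᶜ, (hcl _ hU.isClosed_compl).isOpen_compl,
      (hcl _ hW.isClosed_compl).isOpen_compl, ?_, ?_, ?_⟩
    · rintro z hz ⟨x, hx, rfl⟩
      exact hx (hAU hz)
    · rintro z hz ⟨x, hx, rfl⟩
      exact hx (hBW hz)
    · rw [Set.disjoint_left]
      intro z h1 h2
      obtain ⟨x, rfl⟩ := hqs z
      have hxU : x ∈ U := by
        by_contra h
        exact h1 ⟨x, h, rfl⟩
      have hxW : x ∈ W := by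
        by_contra h
        exact h2 ⟨x, h, rfl⟩
      exact Set.disjoint_left.1 hUW hxU hxW
  have hc : Continuous fun x : X => stoneCechUnit (Quotient.mk s x) :=
    continuous_stoneCechUnit.comp hqc
  change _ ∧ Function.Surjective (stoneCechExtend hc) ∧
    ∀ a b : StoneCech X, stoneCechExtend hc a = stoneCechExtend hc b ↔ _
  have hQ := continuous_stoneCechExtend hc
  have hQu := stoneCechExtend_stoneCechUnit hc
  set Q := stoneCechExtend hc with hQdef
  have key : ∀ a b : StoneCech X, Q a = Q b → a ≠ b → a ∈ closure (stoneCechUnit '' V) := by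
    intro a b hab hne'
    by_contra ha
    have hd : Disjoint (closure (stoneCechUnit '' V) ∪ {b}) {a} := by
      rw [Set.disjoint_singleton_right]
      rintro (h | h)
      · exact ha h
      · exact hne' h
    obtain ⟨f, hf0, hf1, hf⟩ := exists_continuous_zero_one_of_isClosed
      (isClosed_closure.union isClosed_singleton) isClosed_singleton hd
    let F : StoneCech X → Set.Icc (0 : ℝ) 1 := fun x => ⟨f x, hf x⟩
    have hF : Continuous F := f.continuous.subtype_mk _
    have hV : ∀ x ∈ V, f (stoneCechUnit x) = 0 := fun x hx =>
      hf0 (Or.inl (subset_closure ⟨x, hx, rfl⟩))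
    let g : Quotient s → Set.Icc (0 : ℝ) 1 := Quotient.lift (fun x => F (stoneCechUnit x)) (by
      intro x y hxy
      rcases (hs x y).1 hxy with rfl | ⟨h1, h2⟩
      · rfl
      · exact Subtype.ext ((hV x h1).trans (hV y h2).symm))
    have hg : Continuous g := (hF.comp continuous_stoneCechUnit).quotient_lift _
    have hext : stoneCechExtend hg ∘ Q = F := by
      refine stoneCech_hom_ext ((continuous_stoneCechExtend hg).comp hQ) hF ?_
      funext x
      change stoneCechExtend hg (Q (stoneCechUnit x)) = _
      rw [hQu, stoneCechExtend_stoneCechUnit]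
      rfl
    have hFab : F a = F b := by
      rw [← hext]
      exact congrArg (stoneCechExtend hg) hab
    have h1 : f a = 1 := hf1 rfl
    have h0 : f b = 0 := hf0 (Or.inr rfl)
    have := congrArg Subtype.val hFab
    change f a = f b at this
    rw [h1, h0] at this
    exact one_ne_zero this
  refine ⟨{ }, ?_, fun a b => ⟨fun h => ?_, ?_⟩⟩
  · have hr : IsClosed (Set.range Q) := (isCompact_range hQ).isClosed
    rw [← Set.range_eq_univ, Set.eq_univ_iff_forall]
    intro z
    have hz := (denseRange_stoneCechUnit (α := Quotient s)) z
    refine closure_minimal ?_ hr hz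
    rintro _ ⟨y, rfl⟩
    obtain ⟨x, rfl⟩ := hqs y
    exact ⟨_, hQu x⟩
  · by_cases hab : a = b
    · exact Or.inl hab
    · exact Or.inr ⟨key a b h hab, key b a h.symm (Ne.symm hab)⟩
  · rintro (rfl | ⟨ha, hb⟩)
    · rfl
    · obtain ⟨v, hv⟩ := hne
      have hsub : closure (stoneCechUnit '' V) ⊆ Q ⁻¹' {stoneCechUnit (Quotient.mk s v)} := by
        refine closure_minimal ?_ (isClosed_singleton.preimage hQ)
        rintro _ ⟨x, hx, rfl⟩
        change Q (stoneCechUnit x) = _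
        rw [hQu, (hmk x v).2 (Or.inr ⟨hx, hv⟩)]
      exact (hsub ha).trans (hsub hb).symm
end

section
/- Let X and Y be normal Hausdorff spaces, I an infinite type, and a : I → X, b : I → Y injective maps whose ranges are closed and carry the discrete subspace topology. On the topological sum X ⊕ Y let s be the equivalence relation whose nontrivial classes are exactly the pairs {Sum.inl (a i), Sum.inr (b i)} for i ∈ I, and let q : X ⊕ Y → Quotient s be the quotient map. For each ultrafilter U on I, let a_U (respectively b_U) be the unique point of StoneCech (X ⊕ Y) to which the family fun i => stoneCechUnit (Sum.inl (a i)) (respectively fun i => stoneCechUnit (Sum.inr (b i))) converges along U. Then the continuous extension Q : StoneCech (X ⊕ Y) → StoneCech (Quotient s) of stoneCechUnit ∘ q is a surjection satisfying: Q p = Q p' if and only if p = p' or there exists an ultrafilter U on I with p ∈ {a_U, b_U} and p' ∈ {a_U, b_U}. Hence βZ = (βX ⊕ βY)/∼_β where the pairs {a_U, b_U} are identified for all ultrafilters U on I. -/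
open Filter Topology

lemma glue_t2 {W : Type*} [TopologicalSpace W] [CompactSpace W] [T2Space W] (E : Setoid W)
    (hE : IsClosed {z : W × W | E.r z.1 z.2}) : T2Space (Quotient E) := by
  have hc : IsClosedMap (Quotient.mk E) := by
    intro F hF
    rw [← isQuotientMap_quotient_mk'.isClosed_preimage]
    have h1 : IsClosed ((Prod.snd : W × W → W) '' ({z : W × W | E.r z.1 z.2} ∩ Prod.fst ⁻¹' F)) :=
      isClosedMap_snd_of_compactSpace _ (hE.inter (hF.preimage continuous_fst))
    convert h1 using 1
    ext w
    constructor
    · rintro ⟨v, hv, hvw⟩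
      exact ⟨(v, w), ⟨Quotient.exact hvw, hv⟩, rfl⟩
    · rintro ⟨⟨v, w'⟩, ⟨h, hv⟩, rfl⟩
      exact ⟨v, hv, Quotient.sound h⟩
  have hcont : Continuous (Quotient.mk E) := continuous_quotient_mk'
  refine ⟨fun x y hxy => ?_⟩
  have hpt : ∀ x : Quotient E, IsClosed (Quotient.mk E ⁻¹' {x}) := by
    intro x
    obtain ⟨w, rfl⟩ := Quotient.exists_rep x
    have := hc _ (isClosed_singleton (x := w))
    rw [Set.image_singleton] at this
    exact this.preimage hcont
  obtain ⟨u, v, hu, hv, hxu, hyv, huv⟩ := normal_separation (hpt x) (hpt y)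
    (Disjoint.preimage _ (Set.disjoint_singleton.2 hxy))
  have hk : ∀ u : Set W, IsOpen u → IsOpen (Set.kernImage (Quotient.mk E) u) :=
    fun _ hu => isClosedMap_iff_kernImage.1 hc hu
  refine ⟨Set.kernImage (Quotient.mk E) u, Set.kernImage (Quotient.mk E) v, hk _ hu, hk _ hv,
    ?_, ?_, ?_⟩
  · intro w hw
    exact hxu hw
  · intro w hw
    exact hyv hw
  · rw [Set.disjoint_left]
    intro z hz hz'
    obtain ⟨w, rfl⟩ := Quotient.exists_rep z
    exact Set.disjoint_left.1 huv (hz rfl) (hz' rfl)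

lemma glue_urysohn {X I : Type*} [TopologicalSpace X] [T4Space X] (a : I → X)
    (ha : Function.Injective a) (haclosed : IsClosed (Set.range a))
    (hadisc : DiscreteTopology (Set.range a)) (S : Set I) :
    ∃ f : X → unitInterval, Continuous f ∧ (∀ i ∈ S, f (a i) = 0) ∧ (∀ i ∉ S, f (a i) = 1) := by
  have hcl : ∀ T : Set I, IsClosed (a '' T) := by
    intro T
    have h1 : IsClosed (Subtype.val '' (Subtype.val ⁻¹' (a '' T) : Set (Set.range a))) :=
      haclosed.isClosedEmbedding_subtypeVal.isClosedMap _ (isClosed_discrete _)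
    rwa [Subtype.image_preimage_coe, Set.inter_eq_right.2 (Set.image_subset_range a T)] at h1
  obtain ⟨f, h0, h1, hf⟩ := exists_continuous_zero_one_of_isClosed (hcl S) (hcl Sᶜ)
    ((Set.disjoint_image_iff ha).2 disjoint_compl_right)
  refine ⟨fun x => ⟨f x, hf x⟩, f.continuous.subtype_mk _, fun i hi => ?_, fun i hi => ?_⟩
  · exact Subtype.ext (h0 ⟨i, hi, rfl⟩)
  · exact Subtype.ext (h1 ⟨i, hi, rfl⟩)

lemma glue_lim {Z I K : Type*} [TopologicalSpace Z] [TopologicalSpace K] [CompactSpace K]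
    [T2Space K] (c : I → Z) (U : Ultrafilter I) (w : StoneCech Z)
    (h : Tendsto (fun i => stoneCechUnit (c i)) ↑U (𝓝 w)) {f : Z → K} (hf : Continuous f)
    (k : K) (hk : ∀ᶠ i in (U : Filter I), f (c i) = k) : stoneCechExtend hf w = k := by
  have h1 := ((continuous_stoneCechExtend hf).tendsto w).comp h
  refine tendsto_nhds_unique h1 (tendsto_const_nhds.congr' ?_)
  filter_upwards [hk] with i hi
  simp [hi]

lemma glue_inj {Z I : Type*} [TopologicalSpace Z] (c : I → Z) (A : Ultrafilter I → StoneCech Z)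
    (hA : ∀ U : Ultrafilter I, Tendsto (fun i => stoneCechUnit (c i)) ↑U (𝓝 (A U)))
    (hc : ∀ S : Set I, ∃ f : Z → unitInterval, Continuous f ∧ (∀ i ∈ S, f (c i) = 0) ∧
      (∀ i ∉ S, f (c i) = 1)) : Function.Injective A := by
  intro U V hUV
  refine Ultrafilter.coe_le_coe.1 fun S hS => ?_
  by_contra hSU
  obtain ⟨f, hf, h0, h1⟩ := hc S
  have e0 := glue_lim c V _ (hA V) hf 0 (by filter_upwards [hS] with i hi using h0 i hi)
  have e1 := glue_lim c U _ (hA U) hf 1 (by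
    filter_upwards [Ultrafilter.compl_mem_iff_notMem.2 hSU] with i hi using h1 i hi)
  rw [hUV, e0] at e1
  exact zero_ne_one e1

lemma glue_cont {Z I : Type*} [TopologicalSpace Z] (c : I → Z) (A : Ultrafilter I → StoneCech Z)
    (hA : ∀ U : Ultrafilter I, Tendsto (fun i => stoneCechUnit (c i)) ↑U (𝓝 (A U))) :
    Continuous A := by
  have : A = Ultrafilter.extend (fun i => stoneCechUnit (c i)) := by
    funext U
    exact (ultrafilter_extend_eq_iff.2 (hA U)).symm
  rw [this]
  exact continuous_ultrafilter_extend _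

lemma glue_pure {Z I : Type*} [TopologicalSpace Z] (c : I → Z) (A : Ultrafilter I → StoneCech Z)
    (hA : ∀ U : Ultrafilter I, Tendsto (fun i => stoneCechUnit (c i)) ↑U (𝓝 (A U))) (i : I) :
    A (pure i) = stoneCechUnit (c i) :=
  tendsto_nhds_unique (hA (pure i)) (tendsto_pure_nhds (fun i => stoneCechUnit (c i)) i)

/-- Corollary 4.11: let `X`, `Y` be normal Hausdorff spaces and `a : I → X`, `b : I → Y`
injective maps (over an infinite index type) with closed discrete ranges. Let `s` identify
`Sum.inl (a i)` with `Sum.inr (b i)` on `X ⊕ Y`, and for each ultrafilter `U` on `I` let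
`a_U = A U` and `b_U = B U` be the `U`-limits in `β(X ⊕ Y)` of the two families. Then the
Stone-Čech extension `Q : β(X ⊕ Y) → β((X ⊕ Y)/s)` of the quotient map is a surjection whose
nontrivial fibres identify exactly the pairs `{a_U, b_U}`; hence
`βZ = (βX ⊕ βY)/∼_β` with `a_U ∼_β b_U` for all ultrafilters `U` on `I`. -/
theorem stoneCech_quotient_glue_two_spaces
    {X Y : Type*} [TopologicalSpace X] [T4Space X] [TopologicalSpace Y] [T4Space Y]
    {I : Type*} [Infinite I]
    (a : I → X) (b : I → Y)
    (ha : Function.Injective a) (hb : Function.Injective b)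
    (haclosed : IsClosed (Set.range a)) (hbclosed : IsClosed (Set.range b))
    (hadisc : DiscreteTopology (Set.range a)) (hbdisc : DiscreteTopology (Set.range b))
    (s : Setoid (X ⊕ Y))
    (hs : ∀ p p' : X ⊕ Y, s.r p p' ↔ p = p' ∨ ∃ i : I,
      (p = Sum.inl (a i) ∧ p' = Sum.inr (b i)) ∨ (p = Sum.inr (b i) ∧ p' = Sum.inl (a i)))
    (A B : Ultrafilter I → StoneCech (X ⊕ Y))
    (hA : ∀ U : Ultrafilter I,
      Filter.Tendsto (fun i : I => stoneCechUnit (Sum.inl (a i) : X ⊕ Y)) ↑U (𝓝 (A U)))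
    (hB : ∀ U : Ultrafilter I,
      Filter.Tendsto (fun i : I => stoneCechUnit (Sum.inr (b i) : X ⊕ Y)) ↑U (𝓝 (B U))) :
    Function.Surjective
        (stoneCechExtend (continuous_stoneCechUnit.comp continuous_quotient_mk' :
          Continuous fun p : X ⊕ Y => stoneCechUnit (Quotient.mk s p))) ∧
      ∀ p p' : StoneCech (X ⊕ Y),
        stoneCechExtend (continuous_stoneCechUnit.comp continuous_quotient_mk' :
            Continuous fun p : X ⊕ Y => stoneCechUnit (Quotient.mk s p)) p =
          stoneCechExtend (continuous_stoneCechUnit.comp continuous_quotient_mk' :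
            Continuous fun p : X ⊕ Y => stoneCechUnit (Quotient.mk s p)) p' ↔
        p = p' ∨ ∃ U : Ultrafilter I,
          p ∈ ({A U, B U} : Set (StoneCech (X ⊕ Y))) ∧
          p' ∈ ({A U, B U} : Set (StoneCech (X ⊕ Y))) := by
  have hcont := continuous_stoneCechExtend
    (continuous_stoneCechUnit.comp continuous_quotient_mk' :
          Continuous fun p : X ⊕ Y => stoneCechUnit (Quotient.mk s p))
  have hunit := stoneCechExtend_stoneCechUnit
    (continuous_stoneCechUnit.comp continuous_quotient_mk' :
          Continuous fun p : X ⊕ Y => stoneCechUnit (Quotient.mk s p))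
  generalize stoneCechExtend (continuous_stoneCechUnit.comp continuous_quotient_mk' :
          Continuous fun p : X ⊕ Y => stoneCechUnit (Quotient.mk s p)) = Q at hcont hunit ⊢
  have hQAB : ∀ U, Q (A U) = Q (B U) := by
    intro U
    have h1 := (hcont.tendsto _).comp (hA U)
    have h2 := (hcont.tendsto _).comp (hB U)
    refine tendsto_nhds_unique h1 (h2.congr fun i => ?_)
    simp only [Function.comp_apply, hunit]
    congr 1
    exact Quotient.sound ((hs _ _).2 (Or.inr ⟨i, Or.inr ⟨rfl, rfl⟩⟩))
  have hAinj : Function.Injective A := by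
    refine glue_inj _ A hA fun S => ?_
    obtain ⟨f, hf, h0, h1⟩ := glue_urysohn a ha haclosed hadisc S
    exact ⟨Sum.elim f (fun _ => 0), hf.sumElim continuous_const, h0, h1⟩
  have hBinj : Function.Injective B := by
    refine glue_inj _ B hB fun S => ?_
    obtain ⟨f, hf, h0, h1⟩ := glue_urysohn b hb hbclosed hbdisc S
    exact ⟨Sum.elim (fun _ => 0) f, continuous_const.sumElim hf, h0, h1⟩
  have hAB : ∀ U V, A U ≠ B V := by
    intro U V hUV
    have hf : Continuous (Sum.elim (fun _ => 0) (fun _ => 1) : X ⊕ Y → unitInterval) :=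
      continuous_const.sumElim continuous_const
    have e0 := glue_lim _ U _ (hA U) hf 0 (Eventually.of_forall fun i => rfl)
    have e1 := glue_lim _ V _ (hB V) hf 1 (Eventually.of_forall fun i => rfl)
    rw [hUV, e1] at e0
    exact one_ne_zero e0
  have hAc := glue_cont _ A hA
  have hBc := glue_cont _ B hB
  refine ⟨?_, fun p p' => ⟨fun h => ?_, ?_⟩⟩
  · have hcl : IsClosed (Set.range Q) := (isCompact_range hcont).isClosed
    have hd : DenseRange (stoneCechUnit : Quotient s → StoneCech (Quotient s)) :=
      denseRange_stoneCechUnit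
    rw [← Set.range_eq_univ, ← hcl.closure_eq, ← Set.univ_subset_iff, ← hd.closure_range]
    refine closure_mono ?_
    rintro _ ⟨z, rfl⟩
    obtain ⟨w, rfl⟩ := Quotient.exists_rep z
    exact ⟨_, hunit w⟩
  · let E : Setoid (StoneCech (X ⊕ Y)) :=
      { r := fun p p' => p = p' ∨ ∃ U : Ultrafilter I,
          p ∈ ({A U, B U} : Set (StoneCech (X ⊕ Y))) ∧
          p' ∈ ({A U, B U} : Set (StoneCech (X ⊕ Y)))
        iseqv := by
          refine ⟨fun _ => Or.inl rfl, ?_, ?_⟩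
          · rintro x y (h | ⟨U, h, h'⟩)
            · exact Or.inl h.symm
            · exact Or.inr ⟨U, h', h⟩
          · rintro x y z (rfl | ⟨U, h, h'⟩) (rfl | ⟨V, k, k'⟩)
            · exact Or.inl rfl
            · exact Or.inr ⟨V, k, k'⟩
            · exact Or.inr ⟨U, h, h'⟩
            · have : U = V := by
                rcases h' with h' | h' <;> rcases k with k | k
                · exact hAinj (h'.symm.trans k)
                · exact (hAB _ _ (h'.symm.trans k)).elim
                · exact (hAB _ _ (k.symm.trans h')).elim
                · exact hBinj (h'.symm.trans k)
              subst this
              exact Or.inr ⟨U, h, k'⟩ }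
    have hE : IsClosed {z : StoneCech (X ⊕ Y) × StoneCech (X ⊕ Y) | E.r z.1 z.2} := by
      have h1 : {z : StoneCech (X ⊕ Y) × StoneCech (X ⊕ Y) | E.r z.1 z.2} =
          Set.diagonal _ ∪ (Set.range (fun U => (A U, B U)) ∪ Set.range (fun U => (B U, A U))) := by
        ext ⟨x, y⟩
        constructor
        · rintro (h | ⟨U, h, h'⟩)
          · exact Or.inl h
          · rcases h with h | h <;> rcases h' with h' | h'
            · exact Or.inl (h.trans h'.symm)
            · exact Or.inr (Or.inl ⟨U, Prod.ext h.symm h'.symm⟩)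
            · exact Or.inr (Or.inr ⟨U, Prod.ext h.symm h'.symm⟩)
            · exact Or.inl (h.trans h'.symm)
        · rintro (h | ⟨U, h⟩ | ⟨U, h⟩)
          · exact Or.inl h
          · exact Or.inr ⟨U, Or.inl (congrArg Prod.fst h).symm, Or.inr (congrArg Prod.snd h).symm⟩
          · exact Or.inr ⟨U, Or.inr (congrArg Prod.fst h).symm, Or.inl (congrArg Prod.snd h).symm⟩
      rw [h1]
      exact isClosed_diagonal.union ((isCompact_range (hAc.prodMk hBc)).isClosed.union
        (isCompact_range (hBc.prodMk hAc)).isClosed)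
    have hT2 : T2Space (Quotient E) := glue_t2 E hE
    have hπ : Continuous (Quotient.mk E) := continuous_quotient_mk'
    have hpi : ∀ i, Quotient.mk E (stoneCechUnit (Sum.inl (a i))) =
        Quotient.mk E (stoneCechUnit (Sum.inr (b i))) := by
      intro i
      refine Quotient.sound (Or.inr ⟨pure i, Or.inl ?_, Or.inr ?_⟩)
      · exact (glue_pure _ A hA i).symm
      · exact (glue_pure _ B hB i).symm
    let g : Quotient s → Quotient E :=
      Quotient.lift (fun z => Quotient.mk E (stoneCechUnit z)) (by
        intro x y hxy
        rcases (hs x y).1 hxy with rfl | ⟨i, ⟨rfl, rfl⟩ | ⟨rfl, rfl⟩⟩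
        · rfl
        · exact hpi i
        · exact (hpi i).symm)
    have hg : Continuous g := (hπ.comp continuous_stoneCechUnit).quotient_lift _
    have key : stoneCechExtend hg ∘ Q = Quotient.mk E := by
      refine stoneCech_hom_ext ((continuous_stoneCechExtend hg).comp hcont) hπ ?_
      funext z
      simp only [Function.comp_apply, hunit, stoneCechExtend_stoneCechUnit]
      rfl
    have h2 : Quotient.mk E p = Quotient.mk E p' := by
      rw [← key]
      simp only [Function.comp_apply, h]
    exact Quotient.exact h2
  · rintro (rfl | ⟨U, h, h'⟩)
    · rfl
    · rcases h with rfl | rfl <;> rcases h' with rfl | rfl <;> simp [hQAB]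
end

section
/- The Stone-Čech remainder of the half-line is connected: the set (Set.range (stoneCechUnit : ℝ≥0 → StoneCech ℝ≥0))ᶜ is a nonempty connected subset of StoneCech ℝ≥0 (i.e. IsConnected holds for it), where ℝ≥0 denotes the nonnegative reals with their usual topology. -/
open scoped NNReal

theorem remainder_eq_aux : (Set.range (stoneCechUnit : ℝ≥0 → StoneCech ℝ≥0))ᶜ
    = ⋂ n : ℕ, closure ((stoneCechUnit : ℝ≥0 → StoneCech ℝ≥0) '' Set.Ici (n : ℝ≥0)) := by
  ext x
  simp only [Set.mem_compl_iff, Set.mem_iInter]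
  constructor
  · intro hx n
    have h1 : x ∈ closure (Set.range (stoneCechUnit : ℝ≥0 → StoneCech ℝ≥0)) :=
      denseRange_stoneCechUnit x
    have h2 : Set.range (stoneCechUnit : ℝ≥0 → StoneCech ℝ≥0) =
        stoneCechUnit '' Set.Icc (0 : ℝ≥0) n ∪ stoneCechUnit '' Set.Ici (n : ℝ≥0) := by
      rw [← Set.image_union, ← Set.image_univ]
      congr 1
      ext y
      simp [le_total y n]
    rw [h2, closure_union] at h1
    rcases h1 with h1 | h1
    · have hc : IsCompact ((stoneCechUnit : ℝ≥0 → StoneCech ℝ≥0) '' Set.Icc (0 : ℝ≥0) n) :=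
        isCompact_Icc.image continuous_stoneCechUnit
      rw [hc.isClosed.closure_eq] at h1
      exact absurd (Set.image_subset_range _ _ h1) hx
    · exact h1
  · rintro h ⟨a, rfl⟩
    obtain ⟨n, hn⟩ := exists_nat_gt a
    obtain ⟨U, hU, hUe⟩ := (isInducing_stoneCechUnit (X := ℝ≥0)).isOpen_iff.1
      (isOpen_Iio (a := (n : ℝ≥0)))
    have ha : a ∈ stoneCechUnit ⁻¹' U := by rw [hUe]; exact hn
    obtain ⟨_, hyU, y, hy, rfl⟩ := mem_closure_iff.1 (h n) U hU ha
    have : y ∈ stoneCechUnit ⁻¹' U := hyU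
    rw [hUe] at this
    exact absurd (Set.mem_Ici.1 hy) (not_le.2 this)

/-- The Stone-Čech remainder of the half-line `ℝ≥0` is nonempty and connected. -/
theorem stoneCech_remainder_halfLine_connected :
    IsConnected ((Set.range (stoneCechUnit : ℝ≥0 → StoneCech ℝ≥0))ᶜ) := by
  rw [remainder_eq_aux]
  set K : ℕ → Set (StoneCech ℝ≥0) :=
    fun n => closure ((stoneCechUnit : ℝ≥0 → StoneCech ℝ≥0) '' Set.Ici (n : ℝ≥0)) with hK
  have hcl : ∀ n, IsClosed (K n) := fun n => isClosed_closure
  have hcp : ∀ n, IsCompact (K n) := fun n => (hcl n).isCompact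
  have hanti : Antitone K := fun m n hmn =>
    closure_mono (Set.image_mono (Set.Ici_subset_Ici.2 (by exact_mod_cast hmn)))
  have hne : ∀ n, (K n).Nonempty := fun n =>
    (Set.nonempty_Ici.image _).closure
  have hpc : ∀ n, IsPreconnected (K n) := fun n =>
    (isPreconnected_Ici.image _ continuous_stoneCechUnit.continuousOn).closure
  have hdir : Directed (· ⊇ ·) K := hanti.directed_ge
  refine ⟨IsCompact.nonempty_iInter_of_directed_nonempty_isCompact_isClosed K hdir hne hcp hcl, ?_⟩
  rw [isPreconnected_iff_subset_of_fully_disjoint_closed (isClosed_iInter hcl)]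
  intro u v hu hv huv hd
  obtain ⟨U, V, hU, hV, huU, hvV, hUV⟩ := normal_separation hu hv hd
  obtain ⟨n, hn⟩ := exists_subset_nhds_of_isCompact (U := U ∪ V) hdir hcp
    (fun x hx => (hU.union hV).mem_nhds (Set.union_subset_union huU hvV (huv hx)))
  rcases isPreconnected_iff_subset_of_disjoint.1 (hpc n) U V hU hV hn
    (by rw [hUV.inter_eq, Set.inter_empty]) with h | h
  · left
    intro x hx
    rcases huv hx with h1 | h1
    · exact h1
    · exact absurd (hvV h1) (Set.disjoint_left.1 hUV (h (Set.mem_iInter.1 hx n)))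
  · right
    intro x hx
    rcases huv hx with h1 | h1
    · exact absurd (h (Set.mem_iInter.1 hx n)) (Set.disjoint_left.1 hUV (huU h1))
    · exact h1
end

section
/- Every connected component of the Stone-Čech remainder G* of the 1-complex |G| contains a point of the closure of the vertex set: for every p ∈ G*, the connected component of p in the subspace G* (connectedComponentIn G* p) meets closure (stoneCechUnit '' V̄), where V̄ ⊆ |G| denotes the set of vertex points of the 1-complex. -/
open SimpleGraph

variable {V : Type*} (G : SimpleGraph V)

/-- The darts of `G` carry the discrete topology. -/
instance : TopologicalSpace G.Dart := ⊥

instance : DiscreteTopology G.Dart := ⟨rfl⟩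

/-- The generating relation for the 1-complex: `(d, t) ∼ (d.symm, 1 − t)`, and
`(d, 0) ∼ (d', 0)` whenever `d` and `d'` have the same initial vertex. -/
def oneComplexRel (p q : G.Dart × unitInterval) : Prop :=
  (q.1 = p.1.symm ∧ q.2 = unitInterval.symm p.2) ∨
    (p.2 = 0 ∧ q.2 = 0 ∧ p.1.fst = q.1.fst)

/-- The equivalence relation generated by `oneComplexRel`. -/
def oneComplexSetoid : Setoid (G.Dart × unitInterval) :=
  Relation.EqvGen.setoid (oneComplexRel G)

/-- The 1-complex `|G|` of the graph `G`. -/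
abbrev OneComplex : Type _ :=
  Quotient (oneComplexSetoid G)

/-- The set of vertex points of the 1-complex. -/
def vertexPoints : Set (OneComplex G) :=
  {x | ∃ d : G.Dart, x = Quotient.mk (oneComplexSetoid G) (d, (0 : unitInterval))}

/-- The set of inner edge points of the 1-complex. -/
def innerEdgePoints : Set (OneComplex G) :=
  {x | ∃ (d : G.Dart) (t : unitInterval), 0 < (t : ℝ) ∧ (t : ℝ) < 1 ∧
    x = Quotient.mk (oneComplexSetoid G) (d, t)}

/-- The Stone-Čech remainder `G*` of the 1-complex `|G|`. -/
def stoneCechRemainder : Set (StoneCech (OneComplex G)) :=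
  (Set.range (stoneCechUnit : OneComplex G → StoneCech (OneComplex G)))ᶜ

open Filter Topology

theorem aux_limit_preconnected {D K : Type*} [TopologicalSpace K] [CompactSpace K] [T2Space K]
    (u : Ultrafilter D) (C : D → Set K) (hC : ∀ d, IsPreconnected (C d)) :
    IsPreconnected (⋂ A : {A : Set D // A ∈ u}, closure (⋃ d ∈ A.1, C d)) := by
  set L := ⋂ A : {A : Set D // A ∈ u}, closure (⋃ d ∈ A.1, C d) with hL
  have hLc : IsClosed L := isClosed_iInter fun _ => isClosed_closure
  rw [isPreconnected_iff_subset_of_fully_disjoint_closed hLc]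
  intro P Q hP hQ hPQ hd
  obtain ⟨U, W, hU, hW, hPU, hQW, hUW⟩ := normal_separation hP hQ hd
  have hLUW : L ⊆ U ∪ W := hPQ.trans (Set.union_subset_union hPU hQW)
  have hdir : Directed (· ⊇ ·)
      (fun A : {A : Set D // A ∈ u} => closure (⋃ d ∈ A.1, C d)) := by
    intro A B
    refine ⟨⟨A.1 ∩ B.1, inter_mem A.2 B.2⟩, ?_, ?_⟩
    · exact closure_mono (Set.biUnion_subset_biUnion_left Set.inter_subset_left)
    · exact closure_mono (Set.biUnion_subset_biUnion_left Set.inter_subset_right)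
  have : Nonempty {A : Set D // A ∈ u} := ⟨⟨Set.univ, univ_mem⟩⟩
  obtain ⟨A, hA⟩ := exists_subset_nhds_of_compactSpace hdir (fun _ => isClosed_closure)
    (fun x hx => (hU.union hW).mem_nhds (hLUW hx))
  have hor : ∀ d ∈ A.1, C d ⊆ U ∨ C d ⊆ W := by
    intro d hdA
    have : C d ⊆ U ∪ W := (Set.subset_biUnion_of_mem (u := C) hdA).trans (subset_closure.trans hA)
    exact isPreconnected_iff_subset_of_disjoint.mp (hC d) U W hU hW this
      (by rw [hUW.inter_eq, Set.inter_empty])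
  have key : ∀ U W : Set K, IsOpen W → Disjoint U W → {d | C d ⊆ U} ∈ u → Disjoint L W := by
    intro U W hW hUW hm
    have h1 : L ⊆ closure (⋃ d ∈ {d | C d ⊆ U}, C d) := Set.iInter_subset_of_subset ⟨_, hm⟩ le_rfl
    have h2 : closure (⋃ d ∈ {d | C d ⊆ U}, C d) ⊆ closure U :=
      closure_mono (Set.iUnion₂_subset fun d hd => hd)
    exact (hUW.closure_left hW).mono_left (h1.trans h2)
  have hu : {d | C d ⊆ U} ∪ {d | C d ⊆ W} ∈ u := mem_of_superset A.2 hor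
  rcases Ultrafilter.union_mem_iff.mp hu with h | h
  · left
    intro x hx
    exact (hPQ hx).resolve_right fun hq => Set.disjoint_left.mp (key U W hW hUW h) hx (hQW hq)
  · right
    intro x hx
    exact (hPQ hx).resolve_left fun hq => Set.disjoint_left.mp (key W U hU hUW.symm h) hx (hPU hq)

/-- The composite map from darts times interval to the Stone-Cech compactification. -/
noncomputable def auxMap (x : G.Dart × unitInterval) : StoneCech (OneComplex G) :=
  stoneCechUnit (Quotient.mk (oneComplexSetoid G) x)

theorem auxMap_continuous : Continuous (auxMap G) :=
  continuous_stoneCechUnit.comp continuous_quotient_mk'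

theorem auxMap_symm (d : G.Dart) (t : unitInterval) :
    auxMap G (d.symm, unitInterval.symm t) = auxMap G (d, t) := by
  unfold auxMap
  congr 1
  exact (Quotient.sound (s := oneComplexSetoid G)
    (Relation.EqvGen.rel _ _ (Or.inl ⟨rfl, rfl⟩))).symm

theorem auxMap_zero (d : G.Dart) :
    auxMap G (d, 0) ∈ stoneCechUnit '' vertexPoints G := ⟨_, ⟨d, rfl⟩, rfl⟩

theorem auxMap_one (d : G.Dart) :
    auxMap G (d, 1) ∈ stoneCechUnit '' vertexPoints G := by
  have := auxMap_symm G d 1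
  rw [unitInterval.symm_one] at this
  rw [← this]
  exact auxMap_zero G _

theorem aux_sep (f : G.Dart × unitInterval → ℝ) (hf : ∀ d, Continuous fun t => f (d, t))
    (hs : ∀ d t, f (d.symm, unitInterval.symm t) = f (d, t))
    (h0 : ∀ d d' : G.Dart, d.fst = d'.fst → f (d, 0) = f (d', 0))
    (x : G.Dart × unitInterval) (hx : 0 < f x) (S : Set (G.Dart × unitInterval))
    (hS : ∀ y ∈ S, f y = 0) : auxMap G x ∉ closure (auxMap G '' S) := by
  have hfc : Continuous f := continuous_prod_of_discrete_left.mpr hf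
  let g : G.Dart × unitInterval → unitInterval := fun y => Set.projIcc 0 1 zero_le_one (f y)
  have hg : Continuous g := continuous_projIcc.comp hfc
  have hrel : ∀ a b, (oneComplexSetoid G) a b → g a = g b := by
    intro a b h0'
    have h' : Relation.EqvGen (oneComplexRel G) a b := h0'
    clear h0'
    induction h' with
    | rel a' b' h =>
      obtain ⟨a1, a2⟩ := a'
      obtain ⟨b1, b2⟩ := b'
      rcases h with ⟨h1, h2⟩ | ⟨h1, h2, h3⟩
      · dsimp at h1 h2; subst h1 h2
        simp only [g, hs]
      · dsimp at h1 h2 h3; subst h1 h2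
        simp only [g, h0 _ _ h3]
    | refl => rfl
    | symm a b h ih => exact ih.symm
    | trans a b c h1 h2 ih1 ih2 => exact ih1.trans ih2
  let k : OneComplex G → unitInterval := Quotient.lift g hrel
  have hk : Continuous k := hg.quotient_lift hrel
  have hE : ∀ y, stoneCechExtend hk (auxMap G y) = g y := fun y =>
    congrFun (stoneCechExtend_extends hk) (Quotient.mk (oneComplexSetoid G) y)
  intro hcl
  have hz : closure (auxMap G '' S) ⊆ {z | stoneCechExtend hk z = 0} := by
    apply closure_minimal
    · rintro _ ⟨y, hy, rfl⟩
      change stoneCechExtend hk (auxMap G y) = 0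
      rw [hE]
      simp only [g, hS y hy]
      exact Set.projIcc_left _
    · exact isClosed_eq (continuous_stoneCechExtend hk) continuous_const
  have h1 : g x = 0 := (hE x).symm.trans (hz hcl)
  have h2 : f x ≤ 0 := (Set.projIcc_eq_left (zero_lt_one)).mp h1
  linarith

theorem aux_main (p : StoneCech (OneComplex G)) (hp : p ∈ stoneCechRemainder G)
    (hpV : p ∉ closure (stoneCechUnit '' vertexPoints G))
    (𝒰 : Ultrafilter (G.Dart × unitInterval)) (hT : Tendsto (auxMap G) 𝒰 (𝓝 p))
    (hsnd : ∀ v, ∀ᶠ x in (𝒰 : Filter (G.Dart × unitInterval)), x.1.snd ≠ v) :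
    (connectedComponentIn (stoneCechRemainder G) p ∩
      closure (stoneCechUnit '' vertexPoints G)).Nonempty := by
  classical
  obtain ⟨N, hN, hNc, hNV⟩ : ∃ N ∈ 𝓝 p, IsClosed N ∧
      N ⊆ (closure (stoneCechUnit '' vertexPoints G))ᶜ :=
    exists_mem_nhds_isClosed_subset (isClosed_closure.isOpen_compl.mem_nhds hpV)
  have hε : ∀ d : G.Dart, ∃ ε : ℝ, 0 < ε ∧ ε ≤ 1 ∧
      ∀ t : unitInterval, (t : ℝ) < ε → auxMap G (d, t) ∉ N := by
    intro d
    have hc : Continuous fun t : unitInterval => auxMap G (d, t) :=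
      (auxMap_continuous G).comp (by fun_prop)
    have h0 : {t : unitInterval | auxMap G (d, t) ∉ N} ∈ 𝓝 (0 : unitInterval) :=
      (hNc.isOpen_compl.preimage hc).mem_nhds
        (fun h => hNV h (subset_closure (auxMap_zero G d)))
    obtain ⟨ε, he, hb⟩ := Metric.mem_nhds_iff.mp h0
    refine ⟨min ε 1, by positivity, min_le_right _ _, fun t ht => hb ?_⟩
    rw [Metric.mem_ball, Subtype.dist_eq, Real.dist_eq]
    have := t.2.1
    simp only [Set.Icc.coe_zero, sub_zero, abs_of_nonneg this]
    exact ht.trans_le (min_le_left _ _)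
  choose ε hε0 hε1 hεN using hε
  let u : Ultrafilter G.Dart := 𝒰.map Prod.fst
  let T : G.Dart → Set (G.Dart × unitInterval) := fun d => (fun t => (d, t)) '' {t | ε d ≤ (t : ℝ)}
  let C : G.Dart → Set (StoneCech (OneComplex G)) := fun d => auxMap G '' T d
  have hC : ∀ d, IsPreconnected (C d) := by
    intro d
    have : IsPreconnected {t : unitInterval | ε d ≤ (t : ℝ)} := by
      apply Set.OrdConnected.isPreconnected
      exact ⟨fun a ha b hb c hc => le_trans (show ε d ≤ (a : ℝ) from ha) hc.1⟩
    exact (this.image _ (by fun_prop)).image _ (auxMap_continuous G).continuousOn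
  have hL := aux_limit_preconnected u C hC
  set L := ⋂ A : {A : Set G.Dart // A ∈ u}, closure (⋃ d ∈ A.1, C d) with hLdef
  have hmemC : ∀ d (t : unitInterval), ε d ≤ t → auxMap G (d, t) ∈ C d := fun d t h =>
    ⟨(d, t), ⟨t, h, rfl⟩, rfl⟩
  have hpL : p ∈ L := by
    refine Set.mem_iInter.mpr fun A => mem_closure_of_tendsto hT ?_
    have hA : ∀ᶠ x in (𝒰 : Filter (G.Dart × unitInterval)), x.1 ∈ A.1 := A.2
    filter_upwards [hA, hT hN] with x hx hxN
    refine Set.mem_biUnion hx (hmemC x.1 x.2 ?_)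
    by_contra h
    exact hεN _ _ (not_le.mp h) hxN
  obtain ⟨q, -, hq⟩ := isCompact_univ.ultrafilter_le_nhds (u.map fun d => auxMap G (d, 1))
    (by simp)
  have hqt : Tendsto (fun d => auxMap G (d, 1)) u (𝓝 q) := hq
  have hqL : q ∈ L := by
    refine Set.mem_iInter.mpr fun A => mem_closure_of_tendsto hqt ?_
    have hA : ∀ᶠ x in (u : Filter G.Dart), x ∈ A.1 := A.2
    filter_upwards [hA] with d hd
    exact Set.mem_biUnion hd (hmemC d 1 (hε1 d))
  have hqV : q ∈ closure (stoneCechUnit '' vertexPoints G) :=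
    mem_closure_of_tendsto hqt (Eventually.of_forall (auxMap_one G))
  have hLX : ∀ x, ∀ A ∈ u, auxMap G x ∉ closure (auxMap G '' (⋃ d ∈ A, T d)) →
      auxMap G x ∉ L := by
    intro x A hA h hxL
    have := Set.mem_iInter.mp hxL ⟨A, hA⟩
    simp only [C, ← Set.image_iUnion₂] at this
    exact h this
  have hvert : ∀ d0, auxMap G (d0, 0) ∉ L := by
    intro d0
    refine hLX _ {d | d.snd ≠ d0.fst} (hsnd d0.fst) ?_
    refine aux_sep G (fun y => (if y.1.fst = d0.fst then max 0 (1 - y.2 / ε y.1) else 0) +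
      (if y.1.snd = d0.fst then max 0 (1 - (1 - y.2) / ε y.1.symm) else 0)) ?_ ?_ ?_ _ ?_ _ ?_
    · intro d
      dsimp only
      split_ifs <;> fun_prop
    · intro d t
      simp [add_comm]
    · intro d d' h
      have : ∀ d : G.Dart, max 0 (1 - (1 - 0) / ε d) = 0 := by
        intro d
        have := (one_le_div (hε0 d)).mpr (hε1 d)
        simp only [sub_zero]
        exact max_eq_left (by linarith)
      simp only [Set.Icc.coe_zero, this, h]
      simp
    · simp only [Set.Icc.coe_zero, if_true, zero_div, sub_zero]
      have : (0:ℝ) < max 0 1 := by simp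
      refine add_pos_of_pos_of_nonneg this ?_
      split_ifs
      · exact le_max_left _ _
      · exact le_rfl
    · intro y hy
      simp only [Set.mem_iUnion] at hy
      obtain ⟨d, hd, t, ht, rfl⟩ := hy
      have hd' : d.snd ≠ d0.fst := hd
      have ht' : ε d ≤ t := ht
      have := (one_le_div (hε0 d)).mpr ht'
      have h2 : max 0 (1 - (t : ℝ) / ε d) = 0 := max_eq_left (by linarith)
      simp [hd', h2]
  have hLsub : L ⊆ stoneCechRemainder G := by
    rintro _ hz ⟨x, rfl⟩
    obtain ⟨⟨d0, t0⟩, rfl⟩ := Quotient.exists_rep x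
    change auxMap G (d0, t0) ∈ L at hz
    by_cases ht0 : t0 = 0
    · subst ht0; exact hvert _ hz
    by_cases ht1 : t0 = 1
    · subst ht1
      rw [← auxMap_symm, unitInterval.symm_one] at hz
      exact hvert _ hz
    have hp0 : (0:ℝ) < t0 := unitInterval.pos_iff_ne_zero.mpr ht0
    have hp1 : (t0:ℝ) < 1 := unitInterval.lt_one_iff_ne_one.mpr ht1
    have hA : {d : G.Dart | d ≠ d0 ∧ d ≠ d0.symm} ∈ u := by
      have h1 : ∀ᶠ d in (u : Filter G.Dart), d.snd ≠ d0.snd := hsnd _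
      have h2 : ∀ᶠ d in (u : Filter G.Dart), d.snd ≠ d0.fst := hsnd _
      filter_upwards [h1, h2] with d h1 h2
      exact ⟨fun h => h1 (by rw [h]), fun h => h2 (by rw [h]; rfl)⟩
    refine hLX _ _ hA ?_ hz
    refine aux_sep G (fun y => if y.1 = d0 ∨ y.1 = d0.symm then (y.2 : ℝ) * (1 - y.2) else 0)
      ?_ ?_ ?_ _ ?_ _ ?_
    · intro d
      dsimp only
      split_ifs <;> fun_prop
    · intro d t
      have : (d.symm = d0 ∨ d.symm = d0.symm) ↔ (d = d0 ∨ d = d0.symm) := by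
        constructor
        · rintro (h | h)
          · right; rw [← h, Dart.symm_symm]
          · left; rw [← Dart.symm_symm d, h, Dart.symm_symm]
        · rintro (h | h)
          · right; rw [h]
          · left; rw [h, Dart.symm_symm]
      simp only [this, unitInterval.coe_symm_eq]
      split_ifs
      · ring
      · rfl
    · intro d d' h
      simp
    · simp only [true_or, if_true]
      exact mul_pos hp0 (by linarith)
    · intro y hy
      simp only [Set.mem_iUnion] at hy
      obtain ⟨d, hd, t, ht, rfl⟩ := hy
      have hd' : d ≠ d0 ∧ d ≠ d0.symm := hd
      simp [hd'.1, hd'.2]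
  exact ⟨q, hL.subset_connectedComponentIn hpL hLsub hqL, hqV⟩

/-- Every connected component of the Stone-Čech remainder `G*` of the 1-complex `|G|`
meets the closure of the vertex set. -/
theorem connectedComponentIn_remainder_meets_vertexClosure
    [Infinite V] (hG : G.Connected)
    (p : StoneCech (OneComplex G)) (hp : p ∈ stoneCechRemainder G) :
    (connectedComponentIn (stoneCechRemainder G) p ∩
      closure (stoneCechUnit '' vertexPoints G)).Nonempty := by
  by_cases hpV : p ∈ closure (stoneCechUnit '' vertexPoints G)
  · exact ⟨p, mem_connectedComponentIn hp, hpV⟩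
  have hdr : DenseRange (auxMap G) :=
    denseRange_stoneCechUnit.comp (Quotient.mk_surjective.denseRange) continuous_stoneCechUnit
  have : (comap (auxMap G) (𝓝 p)).NeBot := comap_neBot fun t ht => by
    obtain ⟨y, hy, ⟨x, rfl⟩⟩ := mem_closure_iff_nhds.mp (hdr p) t ht
    exact ⟨x, hy⟩
  let 𝒰 := Ultrafilter.of (comap (auxMap G) (𝓝 p))
  have hT : Tendsto (auxMap G) 𝒰 (𝓝 p) := tendsto_comap.mono_left (Ultrafilter.of_le _)
  by_cases hs : ∀ v, ∀ᶠ x in (𝒰 : Filter (G.Dart × unitInterval)), x.1.snd ≠ v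
  · exact aux_main G p hp hpV 𝒰 hT hs
  push Not at hs
  obtain ⟨v, hv⟩ := hs
  have hv' : ∀ᶠ x in (𝒰 : Filter (G.Dart × unitInterval)), x.1.snd = v := hv
  refine aux_main G p hp hpV (𝒰.map fun x => (x.1.symm, unitInterval.symm x.2)) ?_ ?_
  · rw [Ultrafilter.coe_map, tendsto_map'_iff]
    refine hT.congr fun x => ?_
    exact (auxMap_symm G x.1 x.2).symm
  · intro w
    change ∀ᶠ x in (𝒰 : Filter (G.Dart × unitInterval)), x.1.fst ≠ w
    by_contra hw
    have hw' : ∀ᶠ x in (𝒰 : Filter (G.Dart × unitInterval)), x.1.fst = w := by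
      have := Ultrafilter.eventually_not.mpr hw
      simpa using this
    obtain ⟨x0, h1, h2⟩ := (hv'.and hw').exists
    have hK : IsCompact (({x0.1} : Set G.Dart) ×ˢ (Set.univ : Set unitInterval)) :=
      isCompact_singleton.prod isCompact_univ
    obtain ⟨y, -, hy⟩ := hK.ultrafilter_le_nhds 𝒰 (by
      rw [le_principal_iff]
      filter_upwards [hv', hw'] with x hxv hxw
      refine ⟨?_, trivial⟩
      apply Dart.ext
      exact Prod.ext (hxw.trans h2.symm) (hxv.trans h1.symm))
    have : p = auxMap G y :=
      tendsto_nhds_unique hT (((auxMap_continuous G).tendsto y).mono_left hy)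
    exact hp ⟨_, this.symm⟩
end

section
/- For every pair of distinct connected components C₁ ≠ C₂ of the subspace G* (i.e. C₁ = connectedComponentIn G* p₁, C₂ = connectedComponentIn G* p₂ for some p₁, p₂ ∈ G* with C₁ ≠ C₂), there exist a finite set X : Finset V and a set 𝒞 of components of G − X (𝒞 : Set (G.ComponentCompl ↑X)) such that C₁ ⊆ closure (stoneCechUnit '' G[X, 𝒞]) and C₂ ⊆ closure (stoneCechUnit '' G[X, 𝒞ᶜ]), where for a set 𝒟 of components of G − X, G[X, 𝒟] ⊆ |G| denotes the induced subcomplex on X ∪ ⋃ {↑c : c ∈ 𝒟}: the set of all points of |G| represented by pairs (d, t) such that both endvertices of the dart d lie in X ∪ ⋃ {↑c : c ∈ 𝒟}. -/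
open SimpleGraph

variable {V : Type*} (G : SimpleGraph V)

/-- The part `G[X, 𝒞]` of the 1-complex induced on `X` together with the components in `𝒞`:
all points represented by pairs `(d, t)` whose dart has both endvertices in
`X ∪ ⋃ {↑c : c ∈ 𝒞}`. -/
def inducedPart (X : Finset V) (𝒞 : Set (G.ComponentCompl (X : Set V))) :
    Set (OneComplex G) :=
  {x | ∃ (d : G.Dart) (t : unitInterval),
    x = Quotient.mk (oneComplexSetoid G) (d, t) ∧
    (d.fst ∈ (X : Set V) ∪ ⋃ c ∈ 𝒞, (c : Set V)) ∧
    (d.snd ∈ (X : Set V) ∪ ⋃ c ∈ 𝒞, (c : Set V))}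

section Aux

open Set Filter Topology

variable {G}

/-- Point of the complex. -/
def ocPt (d : G.Dart) (t : unitInterval) : OneComplex G :=
  Quotient.mk (oneComplexSetoid G) (d, t)

theorem ocPt_surj (x : OneComplex G) : ∃ d t, x = ocPt d t := by
  induction x using Quotient.inductionOn with
  | h a => exact ⟨a.1, a.2, rfl⟩

theorem ocPt_symm (d : G.Dart) (t : unitInterval) :
    ocPt d t = ocPt d.symm (unitInterval.symm t) :=
  Quotient.sound (Relation.EqvGen.rel _ _ (Or.inl ⟨rfl, rfl⟩))

theorem ocPt_zero {d d' : G.Dart} (h : d.fst = d'.fst) :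
    ocPt d 0 = ocPt d' 0 :=
  Quotient.sound (Relation.EqvGen.rel _ _ (Or.inr ⟨rfl, rfl, h⟩))

theorem ocPt_continuous (d : G.Dart) : Continuous (ocPt d) :=
  continuous_quotient_mk'.comp (Continuous.prodMk_right d)

theorem oc_lift (φ : G.Dart → unitInterval → ℝ) (hc : ∀ d, Continuous (φ d))
    (hs : ∀ d t, φ d.symm (unitInterval.symm t) = φ d t)
    (h0 : ∀ d d' : G.Dart, d.fst = d'.fst → φ d 0 = φ d' 0) :
    ∃ f : OneComplex G → ℝ, Continuous f ∧ ∀ d t, f (ocPt d t) = φ d t := by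
  have key : ∀ a b : G.Dart × unitInterval, (oneComplexSetoid G) a b →
      φ a.1 a.2 = φ b.1 b.2 := by
    intro a b h
    change Relation.EqvGen (oneComplexRel G) a b at h
    induction h with
    | rel x y h =>
      rcases h with ⟨h1, h2⟩ | ⟨h1, h2, h3⟩
      · rw [h1, h2, hs]
      · rw [h1, h2, h0 _ _ h3]
    | refl x => rfl
    | symm x y _ ih => exact ih.symm
    | trans x y z _ _ ih1 ih2 => exact ih1.trans ih2
  refine ⟨Quotient.lift (fun a : G.Dart × unitInterval => φ a.1 a.2) key, ?_, fun d t => rfl⟩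
  apply Continuous.quotient_lift
  rw [continuous_prod_of_discrete_left]
  exact hc

theorem oc_extend {K : Type*} [TopologicalSpace K] (f : K → ℝ) (hf : Continuous f)
    (hb : ∀ x, |f x| ≤ 1) :
    ∃ F : StoneCech K → ℝ, Continuous F ∧ ∀ x, F (stoneCechUnit x) = f x := by
  let f' : K → Icc (-1 : ℝ) 1 := fun x => ⟨f x, abs_le.mp (hb x)⟩
  have hf' : Continuous f' := hf.subtype_mk _
  refine ⟨fun x => Subtype.val (stoneCechExtend hf' x),
    continuous_subtype_val.comp (continuous_stoneCechExtend hf'), fun x => ?_⟩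
  have := congrFun (stoneCechExtend_extends hf') x
  simp only [Function.comp] at this
  simp only [this, f']

open Classical in
/-- The basic function. -/
noncomputable def ocPhi (ε : G.Dart → ℝ) (X : Finset V) (s : V → ℝ) (d : G.Dart)
    (t : unitInterval) : ℝ :=
  if d.fst ∈ X then s d.snd * min 1 ((t : ℝ) / ε d)
  else if d.snd ∈ X then s d.fst * min 1 ((1 - (t : ℝ)) / ε d.symm)
  else s d.fst

theorem ocPhi_lift (ε : G.Dart → ℝ) (hε : ∀ d, 0 < ε d ∧ ε d ≤ 1) (X : Finset V) (s : V → ℝ)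
    (hX : ∀ v ∈ X, s v = 0) (hadj : ∀ v w, v ∉ X → w ∉ X → G.Adj v w → s v = s w)
    (hb : ∀ v, |s v| ≤ 1) :
    ∃ F : StoneCech (OneComplex G) → ℝ, Continuous F ∧
      ∀ d t, F (stoneCechUnit (ocPt d t)) = ocPhi ε X s d t := by
  obtain ⟨f, hf, hf'⟩ := oc_lift (ocPhi ε X s) (by
      intro d
      unfold ocPhi
      split_ifs <;> fun_prop) (by
      intro d t
      unfold ocPhi
      by_cases h1 : d.fst ∈ X <;> by_cases h2 : d.snd ∈ X <;> simp [h1, h2, hX]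
      exact (hadj _ _ h1 h2 d.adj).symm) (by
      intro d d' h
      have key : ∀ d : G.Dart, ocPhi ε X s d 0 = s d.fst := by
        intro d
        unfold ocPhi
        split_ifs with h1 h2
        · simp [hX _ h1]
        · have : 1 ≤ (1 - ((0 : unitInterval) : ℝ)) / ε d.symm := by
            rw [le_div_iff₀ (hε _).1]; simpa using (hε d.symm).2
          rw [min_eq_left this, mul_one]
        · rfl
      rw [key, key, h])
  obtain ⟨F, hF, hF'⟩ := oc_extend f hf (by
    intro x
    obtain ⟨d, t, rfl⟩ := ocPt_surj x
    rw [hf']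
    have aux : ∀ a r : ℝ, |a| ≤ 1 → 0 ≤ r → |a * min 1 r| ≤ 1 := by
      intro a r ha hr
      rw [abs_mul, abs_of_nonneg (le_min zero_le_one hr)]
      exact mul_le_one₀ ha (le_min zero_le_one hr) (min_le_left _ _)
    unfold ocPhi
    split_ifs
    · exact aux _ _ (hb _) (div_nonneg t.2.1 (hε _).1.le)
    · exact aux _ _ (hb _) (div_nonneg (sub_nonneg.2 t.2.2) (hε _).1.le)
    · exact hb _)
  exact ⟨F, hF, fun d t => by rw [hF', hf']⟩

/-- Truncated open component. -/
def ocS (ε : G.Dart → ℝ) (X : Finset V) (c : G.ComponentCompl (X : Set V)) :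
    Set (OneComplex G) :=
  {x | ∃ d t, x = ocPt d t ∧ d.fst ∈ (c : Set V) ∧ (d.snd ∈ X → (t : ℝ) ≤ 1 - ε d.symm)}

theorem ocPhi_on_S (ε : G.Dart → ℝ) (hε : ∀ d, 0 < ε d ∧ ε d ≤ 1) (X : Finset V) (s : V → ℝ)
    (d : G.Dart) (t : unitInterval) (h1 : d.fst ∉ X) (h2 : d.snd ∈ X → (t : ℝ) ≤ 1 - ε d.symm) :
    ocPhi ε X s d t = s d.fst := by
  unfold ocPhi
  rw [if_neg h1]
  split_ifs with h
  · have : 1 ≤ (1 - (t : ℝ)) / ε d.symm := by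
      rw [le_div_iff₀ (hε _).1]; linarith [h2 h]
    rw [min_eq_left this, mul_one]
  · rfl

theorem oc_notMem (X : Finset V) (c : G.ComponentCompl (X : Set V)) {v : V}
    (h : v ∈ (c : Set V)) : v ∉ X := by
  obtain ⟨h, _⟩ := h
  exact h

theorem ocS_sub (ε : G.Dart → ℝ) (X : Finset V) (c : G.ComponentCompl (X : Set V))
    (𝒞 : Set (G.ComponentCompl (X : Set V))) (hc : c ∈ 𝒞) : ocS ε X c ⊆ inducedPart G X 𝒞 := by
  rintro x ⟨d, t, rfl, h1, -⟩
  refine ⟨d, t, rfl, Or.inr (mem_biUnion hc h1), ?_⟩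
  by_cases h : d.snd ∈ X
  · exact Or.inl h
  · exact Or.inr (mem_biUnion hc (ComponentCompl.mem_of_adj _ _ h1 h d.adj))

theorem ocS_conn (ε : G.Dart → ℝ) (hε : ∀ d, 0 < ε d ∧ ε d ≤ 1) (X : Finset V)
    (c : G.ComponentCompl (X : Set V)) : IsPreconnected (ocS ε X c) := by
  let I := {v : ↥((X : Set V)ᶜ) // (G.induce (X : Set V)ᶜ).connectedComponentMk v = c}
  let st : I → Set (OneComplex G) := fun v =>
    ⋃ d : {d : G.Dart // d.fst = v.1.1},
      ocPt d.1 '' {t | d.1.snd ∈ X → (t : ℝ) ≤ 1 - ε d.1.symm}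
  have hst : ocS ε X c = ⋃ v, st v := by
    ext x
    simp only [ocS, mem_ofPred_eq, mem_iUnion, st]
    constructor
    · rintro ⟨d, t, rfl, ⟨h, hc⟩, h2⟩
      exact ⟨⟨⟨d.fst, h⟩, hc⟩, ⟨d, rfl⟩, t, h2, rfl⟩
    · rintro ⟨⟨⟨v, h⟩, hc⟩, ⟨d, hd⟩, t, h2, rfl⟩
      change d.fst = v at hd
      subst hd
      exact ⟨d, t, rfl, ⟨h, hc⟩, h2⟩
  rw [hst]
  apply IsPreconnected.iUnion_of_reflTransGen
  · intro v
    by_cases hd : Nonempty {d : G.Dart // d.fst = v.1.1}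
    · obtain ⟨d0⟩ := hd
      apply isPreconnected_iUnion
      · refine ⟨ocPt d0.1 0, mem_iInter.2 fun d => ⟨0, ?_, ocPt_zero (d.2.trans d0.2.symm)⟩⟩
        intro _
        simpa using (hε _).2
      · intro d
        apply IsPreconnected.image _ _ (ocPt_continuous _).continuousOn
        apply OrdConnected.isPreconnected
        refine ⟨fun a ha b hb z hz h => ?_⟩
        exact le_trans (by exact_mod_cast hz.2) (hb h)
    · rw [not_nonempty_iff] at hd
      simp only [st, iUnion_of_empty]
      exact isPreconnected_empty
  · rintro ⟨v, hv⟩ ⟨w, hw⟩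
    have hr : (G.induce (X : Set V)ᶜ).Reachable v w :=
      ConnectedComponent.exact (hv.trans hw.symm)
    obtain ⟨p⟩ := hr
    induction p with
    | nil => exact Relation.ReflTransGen.refl
    | @cons a b e hab p ih =>
      have hb : (G.induce (X : Set V)ᶜ).connectedComponentMk b = c := by
        rw [← hv]; exact (ConnectedComponent.sound hab.reachable).symm
      refine Relation.ReflTransGen.head ?_ (ih hb hw)
      have hab' : G.Adj a.1 b.1 := hab
      refine ⟨ocPt ⟨(a.1, b.1), hab'⟩ 0, mem_iUnion.2 ⟨⟨⟨(a.1, b.1), hab'⟩, rfl⟩, 0, ?_, rfl⟩,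
        mem_iUnion.2 ⟨⟨⟨(b.1, a.1), hab'.symm⟩, rfl⟩, 1, ?_, ?_⟩⟩
      · intro h; exact absurd h b.2
      · intro h; exact absurd h a.2
      · rw [ocPt_symm]
        simp only [unitInterval.symm_one]
        rfl

/-- Eps is good at p. -/
def ocGood (ε : G.Dart → ℝ) (p : StoneCech (OneComplex G)) : Prop :=
  ∀ v, ∀ᶠ q in 𝓝 p, ∀ (d : G.Dart) t, d.fst = v → stoneCechUnit (ocPt d t) = q → ε d ≤ (t : ℝ)

theorem oc_exists_eps (p : StoneCech (OneComplex G)) (hp : p ∈ stoneCechRemainder G) :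
    ∃ ε : G.Dart → ℝ, (∀ d, 0 < ε d ∧ ε d ≤ 1) ∧ ocGood ε p := by
  have h1 : ∀ v : V, ∃ W ∈ 𝓝 p, ∀ d : G.Dart, d.fst = v →
      ∃ e : ℝ, 0 < e ∧ e ≤ 1 ∧ ∀ t : unitInterval, stoneCechUnit (ocPt d t) ∈ W → e ≤ t := by
    intro v
    by_cases hd : ∃ d0 : G.Dart, d0.fst = v
    · obtain ⟨d0, rfl⟩ := hd
      have hne : p ≠ stoneCechUnit (ocPt d0 0) := fun h => hp ⟨_, h.symm⟩
      obtain ⟨W, U, hW, hU, hpW, hxU, hdis⟩ := t2_separation hne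
      refine ⟨W, hW.mem_nhds hpW, fun d hd => ?_⟩
      have hcont : Continuous fun t => (stoneCechUnit (ocPt d t) : StoneCech (OneComplex G)) :=
        continuous_stoneCechUnit.comp (ocPt_continuous d)
      have : (fun t => (stoneCechUnit (ocPt d t) : StoneCech (OneComplex G))) ⁻¹' U ∈ 𝓝 0 := by
        apply hcont.continuousAt.preimage_mem_nhds
        apply hU.mem_nhds
        rwa [ocPt_zero hd]
      obtain ⟨δ, hδ, hball⟩ := Metric.mem_nhds_iff.1 this
      refine ⟨min δ 1, lt_min hδ one_pos, min_le_right _ _, fun t ht => ?_⟩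
      by_contra hlt
      push Not at hlt
      have ht' : t ∈ Metric.ball (0 : unitInterval) δ := by
        rw [Metric.mem_ball, Subtype.dist_eq, Real.dist_eq]
        have := t.2.1
        simp only [Set.Icc.coe_zero, sub_zero]
        rw [abs_of_nonneg this]
        exact lt_of_lt_of_le hlt (min_le_left _ _)
      exact disjoint_left.1 hdis ht (hball ht')
    · exact ⟨univ, univ_mem, fun d hdv => absurd ⟨d, hdv⟩ hd⟩
  choose W hW h2 using h1
  have h3 := fun d : G.Dart => h2 d.fst d rfl
  choose e he1 he2 he3 using h3
  refine ⟨e, fun d => ⟨he1 d, he2 d⟩, fun v => ?_⟩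
  filter_upwards [hW v] with q hq d t hd hdq
  subst hd
  exact he3 d t (hdq ▸ hq)

theorem ocGood_mono {ε ε' : G.Dart → ℝ} {p} (h : ∀ d, ε d ≤ ε' d) (hg : ocGood ε' p) :
    ocGood ε p := by
  intro v
  filter_upwards [hg v] with q hq d t hd hdq
  exact (h d).trans (hq d t hd hdq)

theorem oc_near (ε : G.Dart → ℝ) (p : StoneCech (OneComplex G))
    (hp : p ∈ stoneCechRemainder G) (hg : ocGood ε p) (X : Finset V) :
    ∀ᶠ q in 𝓝 p, ∀ x, stoneCechUnit x = q → ∃ c, x ∈ ocS ε X c := by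
  have h1 : ∀ᶠ q in 𝓝 p, ∀ v ∈ X, ∀ (d : G.Dart) t, d.fst = v →
      stoneCechUnit (ocPt d t) = q → ε d ≤ (t : ℝ) :=
    (Filter.eventually_all_finset X).2 fun v _ => hg v
  have hfin : {d : G.Dart | d.fst ∈ X ∧ d.snd ∈ X}.Finite := by
    apply Set.Finite.of_finite_image (f := fun d : G.Dart => d.toProd)
    · apply (X ×ˢ X).finite_toSet.subset
      rintro _ ⟨d, hd, rfl⟩
      simpa using hd
    · intro a _ b _ h
      exact Dart.ext _ _ h
  have hcomp : IsCompact (⋃ d ∈ {d : G.Dart | d.fst ∈ X ∧ d.snd ∈ X},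
      range fun t => (stoneCechUnit (ocPt d t) : StoneCech (OneComplex G))) :=
    hfin.isCompact_biUnion fun d _ =>
      isCompact_range (continuous_stoneCechUnit.comp (ocPt_continuous d))
  have h2 := hcomp.isClosed.isOpen_compl.mem_nhds (x := p) (by
    intro h
    simp only [mem_iUnion] at h
    obtain ⟨d, _, t, ht⟩ := h
    exact hp ⟨_, ht⟩)
  filter_upwards [h1, h2] with q hq1 hq2 x hx
  have main : ∀ d t, x = ocPt d t → d.fst ∉ X → ∃ c, x ∈ ocS ε X c := by
    intro d t hxd hd
    refine ⟨G.componentComplMk (K := (X : Set V)) hd, d, t, hxd,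
      G.componentComplMk_mem hd, fun hs => ?_⟩
    have := hq1 d.snd hs d.symm (unitInterval.symm t) rfl (by rw [← ocPt_symm, ← hxd, hx])
    rw [unitInterval.coe_symm_eq] at this
    linarith
  obtain ⟨d, t, hxd⟩ := ocPt_surj x
  by_cases hf : d.fst ∈ X
  · by_cases hs : d.snd ∈ X
    · refine absurd ?_ hq2
      simp only [mem_iUnion]
      exact ⟨d, ⟨hf, hs⟩, t, by rw [← hx, hxd]⟩
    · exact main d.symm (unitInterval.symm t) (by rw [hxd, ocPt_symm]) hs
  · exact main d t hxd hf

theorem oc_mem_closure {K : Type*} [TopologicalSpace K] {p : StoneCech K} {Z : Set K}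
    (h : ∀ W ∈ 𝓝 p, ∃ x ∈ Z, stoneCechUnit x ∈ W) : p ∈ closure (stoneCechUnit '' Z) := by
  rw [mem_closure_iff_nhds]
  intro W hW
  obtain ⟨x, hx, hxW⟩ := h W hW
  exact ⟨_, hxW, x, hx, rfl⟩

theorem oc_disj (p : StoneCech (OneComplex G))
    (hp : p ∈ stoneCechRemainder G) (X : Finset V) (𝒞 : Set (G.ComponentCompl (X : Set V)))
    (hP : p ∈ closure (stoneCechUnit '' inducedPart G X 𝒞))
    (hQ : p ∈ closure (stoneCechUnit '' inducedPart G X 𝒞ᶜ)) : False := by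
  classical
  obtain ⟨ε, hε, hg⟩ := oc_exists_eps p hp
  let s : V → ℝ := fun v => if v ∈ X then 0 else if v ∈ ⋃ c ∈ 𝒞, (c : Set V) then 1 else -1
  have hadj' : ∀ v w, w ∉ X → G.Adj v w → v ∈ ⋃ c ∈ 𝒞, (c : Set V) →
      w ∈ ⋃ c ∈ 𝒞, (c : Set V) := by
    intro v w hw hvw h
    simp only [mem_iUnion] at h ⊢
    obtain ⟨c, hc, hv⟩ := h
    exact ⟨c, hc, ComponentCompl.mem_of_adj _ _ hv hw hvw⟩
  obtain ⟨F, hF, hF'⟩ := ocPhi_lift ε hε X s (by intro v hv; simp [s, hv]) (by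
    intro v w hv hw hvw
    have : v ∈ ⋃ c ∈ 𝒞, (c : Set V) ↔ w ∈ ⋃ c ∈ 𝒞, (c : Set V) :=
      ⟨hadj' v w hw hvw, hadj' w v hv hvw.symm⟩
    simp only [s, hv, hw, this]) (by
    intro v; simp only [s]; split_ifs <;> simp)
  have hsP : ∀ v ∈ (X : Set V) ∪ ⋃ c ∈ 𝒞, (c : Set V), 0 ≤ s v := by
    intro v hv
    simp only [s]
    split_ifs with h1 h2
    · exact le_rfl
    · exact zero_le_one
    · rcases hv with h | h
      · exact absurd h h1
      · exact absurd h h2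
  have hsQ : ∀ v ∈ (X : Set V) ∪ ⋃ c ∈ 𝒞ᶜ, (c : Set V), 0 ≤ -s v := by
    intro v hv
    simp only [s]
    split_ifs with h1 h2
    · simp
    · exfalso
      rcases hv with h | h
      · exact absurd h h1
      · simp only [mem_iUnion] at h h2
        obtain ⟨c, hc, hv, e⟩ := h
        obtain ⟨c', hc', hv', e'⟩ := h2
        exact hc (e ▸ e' ▸ hc')
    · simp
  have hr : ∀ d (t : unitInterval), 0 ≤ min 1 ((t : ℝ) / ε d) := fun d t =>
    le_min zero_le_one (div_nonneg t.2.1 (hε _).1.le)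
  have hr' : ∀ d (t : unitInterval), 0 ≤ min 1 ((1 - (t : ℝ)) / ε d) := fun d t =>
    le_min zero_le_one (div_nonneg (sub_nonneg.2 t.2.2) (hε _).1.le)
  have hFP : 0 ≤ F p := by
    refine closure_minimal ?_ (isClosed_Ici.preimage hF) hP
    rintro _ ⟨x, ⟨d, t, rfl, h1, h2⟩, rfl⟩
    change 0 ≤ F (stoneCechUnit (ocPt d t))
    rw [hF']
    unfold ocPhi
    split_ifs
    · exact mul_nonneg (hsP _ h2) (hr _ _)
    · exact mul_nonneg (hsP _ h1) (hr' _ _)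
    · exact hsP _ h1
  have hFQ : F p ≤ 0 := by
    refine closure_minimal ?_ (isClosed_Iic.preimage hF) hQ
    rintro _ ⟨x, ⟨d, t, rfl, h1, h2⟩, rfl⟩
    change F (stoneCechUnit (ocPt d t)) ≤ 0
    rw [hF']
    unfold ocPhi
    split_ifs
    · exact mul_nonpos_of_nonpos_of_nonneg (neg_nonneg.1 (hsQ _ h2)) (hr _ _)
    · exact mul_nonpos_of_nonpos_of_nonneg (neg_nonneg.1 (hsQ _ h1)) (hr' _ _)
    · exact neg_nonneg.1 (hsQ _ h1)
  have hF1 : |F p| = 1 := by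
    have hc : IsClosed {q | |F q| = 1} := isClosed_eq hF.abs continuous_const
    refine closure_minimal (s := stoneCechUnit '' {x | ∃ c, x ∈ ocS ε X c}) ?_ hc
      (oc_mem_closure ?_)
    · rintro _ ⟨x, ⟨c, d, t, rfl, h1, h2⟩, rfl⟩
      have hn := oc_notMem X c h1
      change |F _| = 1
      rw [hF', ocPhi_on_S ε hε X s d t hn h2]
      simp only [s, if_neg hn]
      split_ifs <;> simp
    · intro W hW
      have := inter_mem hW (oc_near ε p hp hg X)
      obtain ⟨_, ⟨h1, h2⟩, x, rfl⟩ := mem_closure_iff_nhds.1 (denseRange_stoneCechUnit p) _ this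
      exact ⟨x, h2 x rfl, h1⟩
  have : F p = 0 := le_antisymm hFQ hFP
  simp [this] at hF1

theorem oc_union (X : Finset V) (𝒞 : Set (G.ComponentCompl (X : Set V))) :
    inducedPart G X 𝒞 ∪ inducedPart G X 𝒞ᶜ = univ := by
  have key : ∀ (d : G.Dart) t, d.fst ∉ X →
      ocPt d t ∈ inducedPart G X 𝒞 ∪ inducedPart G X 𝒞ᶜ := by
    intro d t hd
    have hS : ocPt d t ∈ ocS (fun _ => 0) X (G.componentComplMk (K := (X : Set V)) hd) :=
      ⟨d, t, rfl, G.componentComplMk_mem hd, fun _ => by simpa using t.2.2⟩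
    by_cases hc : G.componentComplMk (K := (X : Set V)) hd ∈ 𝒞
    · exact Or.inl (ocS_sub _ X _ _ hc hS)
    · exact Or.inr (ocS_sub _ X _ _ hc hS)
  rw [eq_univ_iff_forall]
  intro x
  obtain ⟨d, t, rfl⟩ := ocPt_surj x
  by_cases h1 : d.fst ∈ X
  · by_cases h2 : d.snd ∈ X
    · exact Or.inl ⟨d, t, rfl, Or.inl h1, Or.inl h2⟩
    · rw [ocPt_symm]; exact key _ _ h2
  · exact key _ _ h1

theorem oc_comp_sub (p : StoneCech (OneComplex G)) (hp : p ∈ stoneCechRemainder G)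
    (X : Finset V) (𝒞 : Set (G.ComponentCompl (X : Set V)))
    (hP : p ∈ closure (stoneCechUnit '' inducedPart G X 𝒞)) :
    connectedComponentIn (stoneCechRemainder G) p ⊆
        closure (stoneCechUnit '' inducedPart G X 𝒞) := by
  have hpc := isPreconnected_connectedComponentIn (F := stoneCechRemainder G) (x := p)
  have hsub := connectedComponentIn_subset (stoneCechRemainder G) p
  have hcov : ∀ q, q ∈ closure (stoneCechUnit '' inducedPart G X 𝒞) ∪
      closure (stoneCechUnit '' inducedPart G X 𝒞ᶜ) := by
    intro q
    rw [← closure_union, ← image_union, oc_union, image_univ]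
    exact denseRange_stoneCechUnit q
  rcases (isPreconnected_iff_subset_of_disjoint_closed.1 hpc) _ _ isClosed_closure
    isClosed_closure (fun q _ => hcov q) (by
      rw [eq_empty_iff_forall_notMem]
      rintro q ⟨h1, h2, h3⟩
      exact oc_disj q (hsub h1) X 𝒞 h2 h3) with h | h
  · exact h
  · exact (oc_disj p hp X 𝒞 hP (h (mem_connectedComponentIn hp))).elim

/-- Ultralimits of connected sets are connected. -/
theorem oc_limit {K : Type*} [TopologicalSpace K] [CompactSpace K] [T2Space K]
    (u : Ultrafilter (Set K))
    (hu : ∀ᶠ S in (u : Filter (Set K)), IsPreconnected S) :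
    IsPreconnected (⋂ U : {U : Set (Set K) // U ∈ u}, closure (⋃₀ U.1)) := by
  rw [isPreconnected_iff_subset_of_fully_disjoint_closed
    (isClosed_iInter fun _ => isClosed_closure)]
  intro Z₁ Z₂ hZ₁ hZ₂ hsub hdis
  obtain ⟨O₁, O₂, hO₁, hO₂, hZO₁, hZO₂, hO⟩ := normal_separation hZ₁ hZ₂ hdis
  have : Nonempty {U : Set (Set K) // U ∈ u} := ⟨⟨univ, univ_mem⟩⟩
  obtain ⟨⟨U, hU⟩, hUO⟩ := exists_subset_nhds_of_compactSpace
    (V := fun U : {U : Set (Set K) // U ∈ u} => closure (⋃₀ U.1)) (U := O₁ ∪ O₂) (by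
      rintro ⟨A, hA⟩ ⟨B, hB⟩
      exact ⟨⟨A ∩ B, inter_mem hA hB⟩, closure_mono (sUnion_subset_sUnion inter_subset_left),
        closure_mono (sUnion_subset_sUnion inter_subset_right)⟩) (fun _ => isClosed_closure) (by
      intro x hx
      exact (hO₁.union hO₂).mem_nhds ((union_subset_union hZO₁ hZO₂) (hsub hx)))
  have hor : ∀ᶠ S in (u : Filter (Set K)), S ⊆ O₁ ∨ S ⊆ O₂ := by
    filter_upwards [hu, hU] with S hS hSU
    refine (isPreconnected_iff_subset_of_disjoint.1 hS) _ _ hO₁ hO₂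
      (((subset_sUnion_of_mem hSU).trans subset_closure).trans hUO) ?_
    rw [hO.inter_eq, inter_empty]
  have key : ∀ O O' Z : Set K, IsOpen O' → Z ⊆ O' → Disjoint O O' →
      (∀ᶠ S in (u : Filter (Set K)), S ⊆ O) →
      ∀ x ∈ ⋂ U : {U : Set (Set K) // U ∈ u}, closure (⋃₀ U.1), x ∉ Z := by
    intro O O' Z hO' hZ hd hev x hx hxZ
    have h1 : x ∈ closure (⋃₀ {S | S ⊆ O}) := mem_iInter.1 hx ⟨{S | S ⊆ O}, hev⟩
    have h2 : x ∈ closure O := closure_mono (sUnion_subset fun S hS => hS) h1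
    exact disjoint_left.1 (hd.closure_left hO') h2 (hZ hxZ)
  rcases Ultrafilter.eventually_or.1 hor with h | h
  · left
    intro x hx
    exact (hsub hx).resolve_right (key O₁ O₂ Z₂ hO₂ hZO₂ hO h x hx)
  · right
    intro x hx
    exact (hsub hx).resolve_left (key O₂ O₁ Z₁ hO₁ hZO₁ hO.symm h x hx)

/-- Points far from X. -/
def ocT (ε : G.Dart → ℝ) (X : Finset V) : Set (OneComplex G) :=
  {x | ∃ d t, x = ocPt d t ∧ d.fst ∉ X ∧ (d.snd ∈ X → (t : ℝ) ≤ 1 - ε d.symm)}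

theorem ocT_anti (ε : G.Dart → ℝ) {X Y : Finset V} (h : X ⊆ Y) : ocT ε Y ⊆ ocT ε X := by
  rintro x ⟨d, t, rfl, h1, h2⟩
  exact ⟨d, t, rfl, fun hh => h1 (h hh), fun hh => h2 (h hh)⟩

theorem ocS_sub_T (ε : G.Dart → ℝ) (X : Finset V) (c : G.ComponentCompl (X : Set V)) :
    ocS ε X c ⊆ ocT ε X := by
  rintro x ⟨d, t, rfl, h1, h2⟩
  exact ⟨d, t, rfl, oc_notMem X c h1, h2⟩

theorem oc_T_avoid (ε : G.Dart → ℝ) (hε : ∀ d, 0 < ε d ∧ ε d ≤ 1) (x : OneComplex G) :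
    ∃ X : Finset V, stoneCechUnit x ∉ closure (stoneCechUnit '' ocT ε X) := by
  classical
  obtain ⟨d, t, rfl⟩ := ocPt_surj x
  let X : Finset V := {d.fst, d.snd}
  let s : V → ℝ := fun v => if v ∈ X then 0 else 1
  refine ⟨X, fun hmem => ?_⟩
  obtain ⟨F, hF, hF'⟩ := ocPhi_lift ε hε X s (by intro v hv; simp [s, hv]) (by
    intro v w hv hw _
    simp only [s, hv, hw]) (by
    intro v; simp only [s]; split_ifs <;> simp)
  have h1 : F (stoneCechUnit (ocPt d t)) = 1 := by
    refine closure_minimal ?_ (isClosed_eq hF continuous_const) hmem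
    rintro _ ⟨_, ⟨d', t', rfl, h1, h2⟩, rfl⟩
    change F _ = 1
    rw [hF', ocPhi_on_S ε hε X s d' t' h1 h2]
    simp only [s, if_neg h1]
  rw [hF'] at h1
  have a1 : d.fst ∈ X := by simp [X]
  have a2 : d.snd ∈ X := by simp [X]
  simp [ocPhi, a1, a2, s] at h1

theorem oc_link (ε : G.Dart → ℝ) (hε : ∀ d, 0 < ε d ∧ ε d ≤ 1)
    (p₁ p₂ : StoneCech (OneComplex G))
    (h₁ : p₁ ∈ stoneCechRemainder G) (h₂ : p₂ ∈ stoneCechRemainder G)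
    (hg₁ : ocGood ε p₁) (hg₂ : ocGood ε p₂)
    (hno : ¬ ∃ (X : Finset V) (𝒞 : Set (G.ComponentCompl (X : Set V))),
      p₁ ∈ closure (stoneCechUnit '' inducedPart G X 𝒞) ∧
      p₂ ∈ closure (stoneCechUnit '' inducedPart G X 𝒞ᶜ))
    (A B : Set (StoneCech (OneComplex G))) (hA : A ∈ 𝓝 p₁) (hB : B ∈ 𝓝 p₂) (X : Finset V) :
    ∃ S : Set (StoneCech (OneComplex G)), IsPreconnected S ∧ (S ∩ A).Nonempty ∧
      (S ∩ B).Nonempty ∧ S ⊆ stoneCechUnit '' ocT ε X := by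
  by_contra hcon
  apply hno
  have hcon' : ∀ c, ¬ ((∃ x ∈ ocS ε X c, stoneCechUnit x ∈ A) ∧
      (∃ x ∈ ocS ε X c, stoneCechUnit x ∈ B)) := by
    rintro c ⟨⟨x, hx, hxA⟩, ⟨y, hy, hyB⟩⟩
    exact hcon ⟨stoneCechUnit '' ocS ε X c,
      (ocS_conn ε hε X c).image _ continuous_stoneCechUnit.continuousOn,
      ⟨_, ⟨x, hx, rfl⟩, hxA⟩, ⟨_, ⟨y, hy, rfl⟩, hyB⟩, image_mono (ocS_sub_T ε X c)⟩
  refine ⟨X, {c | ∃ x ∈ ocS ε X c, stoneCechUnit x ∈ A}, oc_mem_closure ?_, oc_mem_closure ?_⟩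
  · intro W hW
    have := inter_mem hW (inter_mem hA (oc_near ε p₁ h₁ hg₁ X))
    obtain ⟨_, ⟨hw, ha, h2⟩, x, rfl⟩ :=
      mem_closure_iff_nhds.1 (denseRange_stoneCechUnit p₁) _ this
    obtain ⟨c, hc⟩ := h2 x rfl
    exact ⟨x, ocS_sub ε X c _ (show c ∈ {c | ∃ x ∈ ocS ε X c, stoneCechUnit x ∈ A} from
      ⟨x, hc, ha⟩) hc, hw⟩
  · intro W hW
    have := inter_mem hW (inter_mem hB (oc_near ε p₂ h₂ hg₂ X))
    obtain ⟨_, ⟨hw, hb, h2⟩, x, rfl⟩ :=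
      mem_closure_iff_nhds.1 (denseRange_stoneCechUnit p₂) _ this
    obtain ⟨c, hc⟩ := h2 x rfl
    exact ⟨x, ocS_sub ε X c _ (show c ∈ {c | ∃ x ∈ ocS ε X c, stoneCechUnit x ∈ A}ᶜ from
      fun h => hcon' c ⟨h, x, hc, hb⟩) hc, hw⟩

theorem oc_main (p₁ p₂ : StoneCech (OneComplex G))
    (h₁ : p₁ ∈ stoneCechRemainder G) (h₂ : p₂ ∈ stoneCechRemainder G)
    (hno : ¬ ∃ (X : Finset V) (𝒞 : Set (G.ComponentCompl (X : Set V))),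
      p₁ ∈ closure (stoneCechUnit '' inducedPart G X 𝒞) ∧
      p₂ ∈ closure (stoneCechUnit '' inducedPart G X 𝒞ᶜ)) :
    connectedComponentIn (stoneCechRemainder G) p₁ =
      connectedComponentIn (stoneCechRemainder G) p₂ := by
  classical
  obtain ⟨ε₁, hε₁, hg₁⟩ := oc_exists_eps p₁ h₁
  obtain ⟨ε₂, hε₂, hg₂⟩ := oc_exists_eps p₂ h₂
  let ε : G.Dart → ℝ := fun d => min (ε₁ d) (ε₂ d)
  have hε : ∀ d, 0 < ε d ∧ ε d ≤ 1 := fun d =>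
    ⟨lt_min (hε₁ d).1 (hε₂ d).1, (min_le_left _ _).trans (hε₁ d).2⟩
  have hlink := oc_link ε hε p₁ p₂ h₁ h₂ (ocGood_mono (fun d => min_le_left _ _) hg₁)
    (ocGood_mono (fun d => min_le_right _ _) hg₂) hno
  let I := {A // A ∈ 𝓝 p₁} × {B // B ∈ 𝓝 p₂} × Finset V
  let g : I → Set (Set (StoneCech (OneComplex G))) := fun i =>
    {S | IsPreconnected S ∧ (S ∩ i.1.1).Nonempty ∧
      (S ∩ i.2.1.1).Nonempty ∧ S ⊆ stoneCechUnit '' ocT ε i.2.2}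
  have : Nonempty I := ⟨⟨univ, univ_mem⟩, ⟨univ, univ_mem⟩, ∅⟩
  have hne : (⨅ i, 𝓟 (g i)).NeBot := by
    apply iInf_neBot_of_directed'
    · rintro ⟨⟨A, hA⟩, ⟨B, hB⟩, X⟩ ⟨⟨A', hA'⟩, ⟨B', hB'⟩, X'⟩
      refine ⟨⟨⟨A ∩ A', inter_mem hA hA'⟩, ⟨B ∩ B', inter_mem hB hB'⟩, X ∪ X'⟩, ?_, ?_⟩
      · apply principal_mono.2
        rintro S ⟨s1, s2, s3, s4⟩
        exact ⟨s1, s2.mono (inter_subset_inter_right _ inter_subset_left),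
          s3.mono (inter_subset_inter_right _ inter_subset_left),
          s4.trans (image_mono (ocT_anti ε Finset.subset_union_left))⟩
      · apply principal_mono.2
        rintro S ⟨s1, s2, s3, s4⟩
        exact ⟨s1, s2.mono (inter_subset_inter_right _ inter_subset_right),
          s3.mono (inter_subset_inter_right _ inter_subset_right),
          s4.trans (image_mono (ocT_anti ε Finset.subset_union_right))⟩
    · rintro ⟨⟨A, hA⟩, ⟨B, hB⟩, X⟩
      rw [principal_neBot_iff]
      exact hlink A B hA hB X
  let u := Ultrafilter.of (⨅ i, 𝓟 (g i))
  have hu : ∀ i, g i ∈ u := fun i =>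
    (Ultrafilter.of_le (⨅ i, 𝓟 (g i))) (mem_iInf_of_mem i (mem_principal_self (g i)))
  have i0 : I := Classical.choice this
  have hL := oc_limit u (mem_of_superset (hu i0) fun S hS => hS.1)
  set L := ⋂ U : {U : Set (Set (StoneCech (OneComplex G))) // U ∈ u}, closure (⋃₀ U.1) with hLdef
  have hp₁ : p₁ ∈ L := by
    refine mem_iInter.2 fun U => mem_closure_iff_nhds.2 fun A hA => ?_
    obtain ⟨S, hS, hSU⟩ := u.nonempty_of_mem
      (inter_mem (hu ⟨⟨A, hA⟩, ⟨univ, univ_mem⟩, ∅⟩) U.2)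
    obtain ⟨q, hqS, hqA⟩ := hS.2.1
    exact ⟨q, hqA, S, hSU, hqS⟩
  have hp₂ : p₂ ∈ L := by
    refine mem_iInter.2 fun U => mem_closure_iff_nhds.2 fun A hA => ?_
    obtain ⟨S, hS, hSU⟩ := u.nonempty_of_mem
      (inter_mem (hu ⟨⟨univ, univ_mem⟩, ⟨A, hA⟩, ∅⟩) U.2)
    obtain ⟨q, hqS, hqA⟩ := hS.2.2.1
    exact ⟨q, hqA, S, hSU, hqS⟩
  have hLG : L ⊆ stoneCechRemainder G := by
    rintro q hq ⟨x, rfl⟩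
    obtain ⟨X, hX⟩ := oc_T_avoid ε hε x
    apply hX
    have h3 := mem_iInter.1 hq ⟨_, hu ⟨⟨univ, univ_mem⟩, ⟨univ, univ_mem⟩, X⟩⟩
    exact closure_mono (sUnion_subset fun S hS => hS.2.2.2) h3
  exact connectedComponentIn_eq (hL.subset_connectedComponentIn hp₁ hLG hp₂)

end Aux

/-- Distinct connected components of the Stone-Čech remainder `G*` are distinguished by a
finite-order separation of `G`: there are a finite `X` and a set `𝒞` of components of `G − X`
with `C₁ ⊆ closure (stoneCechUnit '' G[X, 𝒞])` and `C₂ ⊆ closure (stoneCechUnit '' G[X, 𝒞ᶜ])`. -/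
theorem components_of_remainder_distinguished
    [Infinite V] (hG : G.Connected)
    (p₁ p₂ : StoneCech (OneComplex G))
    (h₁ : p₁ ∈ stoneCechRemainder G) (h₂ : p₂ ∈ stoneCechRemainder G)
    (hne : connectedComponentIn (stoneCechRemainder G) p₁ ≠
      connectedComponentIn (stoneCechRemainder G) p₂) :
    ∃ (X : Finset V) (𝒞 : Set (G.ComponentCompl (X : Set V))),
      connectedComponentIn (stoneCechRemainder G) p₁ ⊆
        closure (stoneCechUnit '' inducedPart G X 𝒞) ∧
      connectedComponentIn (stoneCechRemainder G) p₂ ⊆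
        closure (stoneCechUnit '' inducedPart G X 𝒞ᶜ) := by
  by_contra hcon
  apply hne
  apply oc_main p₁ p₂ h₁ h₂
  rintro ⟨X, 𝒞, hP, hQ⟩
  exact hcon ⟨X, 𝒞, oc_comp_sub p₁ h₁ X 𝒞 hP, oc_comp_sub p₂ h₂ X 𝒞ᶜ hQ⟩
end

section
/- Let G be a connected simple graph on an infinite vertex set V having at least one vertex of infinite degree (so G is not locally finite). Then no Hausdorff compactification of the 1-complex |G| has a totally disconnected remainder: for every compact Hausdorff space K and every topological embedding e : |G| → K with dense range, the remainder (Set.range e)ᶜ is not totally disconnected, i.e. it contains a connected subset with at least two points. -/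
open SimpleGraph

variable {V : Type*} (G : SimpleGraph V)

open Filter Topology Set

theorem aux_preconn {ι K : Type*} [TopologicalSpace K] [CompactSpace K] [T2Space K]
    (U : Ultrafilter ι) (C : ι → Set K) (hC : ∀ i, IsPreconnected (C i)) :
    IsPreconnected {x : K | ClusterPt x ((U : Filter ι).bind fun i => 𝓟 (C i))} := by
  set F : Filter K := (U : Filter ι).bind fun i => 𝓟 (C i) with hF
  have hmem : ∀ B : Set K, B ∈ F ↔ ∀ᶠ i in (U : Filter ι), C i ⊆ B := by
    intro B
    rw [hF, Filter.mem_bind']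
    simp [Filter.Eventually]
  have hcl : IsClosed {x : K | ClusterPt x F} := isClosed_setOfPred_clusterPt
  rw [isPreconnected_iff_subset_of_disjoint_closed]
  intro u v hu hv huv hdis
  set S := {x : K | ClusterPt x F}
  have hd : Disjoint (S ∩ u) (S ∩ v) := by
    rw [Set.disjoint_iff_inter_eq_empty, ← hdis]
    ext x; simp only [Set.mem_inter_iff]; tauto
  obtain ⟨O1, O2, hO1, hO2, h1, h2, h12⟩ :=
    normal_separation (hcl.inter hu) (hcl.inter hv) hd
  have key : O1 ∪ O2 ∈ F := by
    by_contra hn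
    have hne : (F ⊓ 𝓟 (O1 ∪ O2)ᶜ).NeBot := by
      rw [Filter.neBot_iff]
      intro h
      exact hn (by rwa [← Filter.mem_iff_inf_principal_compl] at h)
    obtain ⟨x, hx⟩ := exists_clusterPt_of_compactSpace (F ⊓ 𝓟 (O1 ∪ O2)ᶜ)
    have hxS : x ∈ S := hx.mono inf_le_left
    have hxc : x ∈ (O1 ∪ O2)ᶜ := by
      have : ClusterPt x (𝓟 (O1 ∪ O2)ᶜ) := hx.mono inf_le_right
      rw [← mem_closure_iff_clusterPt] at this
      rwa [(hO1.union hO2).isClosed_compl.closure_eq] at this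
    apply hxc
    rcases huv hxS with h | h
    · exact Or.inl (h1 ⟨hxS, h⟩)
    · exact Or.inr (h2 ⟨hxS, h⟩)
  have half : ∀ A B : Set K, IsOpen B → Disjoint A B → (∀ᶠ i in (U : Filter ι), C i ⊆ A) →
      S ∩ B = ∅ := by
    intro A B hB hAB hA
    rw [Set.eq_empty_iff_forall_notMem]
    rintro x ⟨hx, hxB⟩
    obtain ⟨y, hy⟩ := clusterPt_iff_nonempty.1 hx (hB.mem_nhds hxB) ((hmem A).2 hA)
    exact Set.disjoint_left.1 hAB hy.2 hy.1
  have hev : ∀ᶠ i in (U : Filter ι), C i ⊆ O1 ∨ C i ⊆ O2 := by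
    filter_upwards [(hmem _).1 key] with i hi
    exact (hC i).subset_or_subset hO1 hO2 h12 hi
  rcases Ultrafilter.eventually_or.1 hev with h | h
  · left
    intro x hx
    rcases huv hx with h' | h'
    · exact h'
    · have := half O1 O2 hO2 h12 h
      exact (Set.eq_empty_iff_forall_notMem.1 this x ⟨hx, h2 ⟨hx, h'⟩⟩).elim
  · right
    intro x hx
    rcases huv hx with h' | h'
    · have := half O2 O1 hO1 h12.symm h
      exact (Set.eq_empty_iff_forall_notMem.1 this x ⟨hx, h1 ⟨hx, h'⟩⟩).elim
    · exact h'

theorem aux_lift {V : Type*} (G : SimpleGraph V) (P : G.Dart × unitInterval → Prop)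
    (hP : ∀ p q, oneComplexRel G p q → (P p ↔ P q)) :
    ∃ Z : Set (OneComplex G), ∀ p, Quotient.mk (oneComplexSetoid G) p ∈ Z ↔ P p := by
  refine ⟨fun x => Quotient.lift P ?_ x, fun p => Iff.rfl⟩
  intro a b hab
  replace hab : Relation.EqvGen (oneComplexRel G) a b := hab
  induction hab with
  | rel x y h => exact propext (hP x y h)
  | refl x => rfl
  | symm x y _ ih => exact ih.symm
  | trans x y z _ _ ih1 ih2 => exact ih1.trans ih2

theorem aux_isOpen {V : Type*} (G : SimpleGraph V) (Z : Set (OneComplex G))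
    (h : ∀ d : G.Dart, IsOpen {t : unitInterval | Quotient.mk (oneComplexSetoid G) (d, t) ∈ Z}) :
    IsOpen Z := by
  have : IsOpen (Quotient.mk (oneComplexSetoid G) ⁻¹' Z) := by
    rw [isOpen_iff_mem_nhds]
    rintro ⟨d, t⟩ hdt
    rw [nhds_prod_eq, nhds_discrete, mem_prod_iff]
    refine ⟨{d}, by simp, _, (h d).mem_nhds hdt, ?_⟩
    rintro ⟨d', t'⟩ ⟨h1, h2⟩
    obtain rfl : d' = d := h1
    exact h2
  exact this

theorem aux_star {V : Type*} (G : SimpleGraph V) (v : V) :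
    ∃ Z : Set (OneComplex G), IsOpen Z ∧
      (∀ p, Quotient.mk (oneComplexSetoid G) p ∈ Z ↔
        (p.1.fst = v ∧ (p.2 : ℝ) < 1/2) ∨ (p.1.snd = v ∧ (1/2 : ℝ) < p.2)) := by
  obtain ⟨Z, hZ⟩ := aux_lift G (fun p => (p.1.fst = v ∧ (p.2 : ℝ) < 1/2) ∨
      (p.1.snd = v ∧ (1/2 : ℝ) < p.2)) (by
    rintro ⟨d, t⟩ ⟨d', t'⟩ (⟨h1, h2⟩ | ⟨h1, h2, h3⟩)
    · simp only at h1 h2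
      subst h1 h2
      simp only [unitInterval.coe_symm_eq, SimpleGraph.Dart.symm, Prod.fst_swap, Prod.snd_swap]
      constructor
      · rintro (⟨h, h'⟩ | ⟨h, h'⟩)
        · exact Or.inr ⟨h, by linarith⟩
        · exact Or.inl ⟨h, by linarith⟩
      · rintro (⟨h, h'⟩ | ⟨h, h'⟩)
        · exact Or.inr ⟨h, by linarith⟩
        · exact Or.inl ⟨h, by linarith⟩
    · simp only at h1 h2 h3
      subst h1 h2
      norm_num [h3])
  refine ⟨Z, aux_isOpen G Z fun d => ?_, hZ⟩
  simp only [hZ]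
  refine IsOpen.union (IsOpen.and isOpen_const ?_) (IsOpen.and isOpen_const ?_)
  · exact isOpen_lt continuous_subtype_val continuous_const
  · exact isOpen_lt continuous_const continuous_subtype_val

theorem aux_closed {V : Type*} (G : SimpleGraph V) (v : V) (A : Set V) :
    ∃ Z : Set (OneComplex G), IsClosed Z ∧
      (∀ p, Quotient.mk (oneComplexSetoid G) p ∈ Z ↔
        (p.1.fst = v ∧ p.1.snd ∈ A) ∨ (p.1.snd = v ∧ p.1.fst ∈ A) ∨
        (p.2 = 0 ∧ (p.1.fst = v ∨ p.1.fst ∈ A)) ∨ (p.2 = 1 ∧ (p.1.snd = v ∨ p.1.snd ∈ A))) := by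
  obtain ⟨Z, hZ⟩ := aux_lift G (fun p => (p.1.fst = v ∧ p.1.snd ∈ A) ∨
        (p.1.snd = v ∧ p.1.fst ∈ A) ∨
        (p.2 = 0 ∧ (p.1.fst = v ∨ p.1.fst ∈ A)) ∨ (p.2 = 1 ∧ (p.1.snd = v ∨ p.1.snd ∈ A))) (by
    rintro ⟨d, t⟩ ⟨d', t'⟩ (⟨h1, h2⟩ | ⟨h1, h2, h3⟩)
    · simp only at h1 h2
      subst h1 h2
      simp only [SimpleGraph.Dart.symm, Prod.fst_swap, Prod.snd_swap,
        unitInterval.symm_eq_zero, unitInterval.symm_eq_one]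
      tauto
    · simp only at h1 h2 h3
      subst h1 h2
      simp only [h3, zero_ne_one, false_and, or_false, true_and]
      tauto)
  refine ⟨Z, ⟨aux_isOpen G _ fun d => ?_⟩, hZ⟩
  simp only [Set.mem_compl_iff, hZ]
  rw [← Set.compl_ofPred, isOpen_compl_iff]
  by_cases h : (d.fst = v ∧ d.snd ∈ A) ∨ (d.snd = v ∧ d.fst ∈ A)
  · convert isClosed_univ
    ext t; simp only [Set.mem_ofPred_eq, Set.mem_univ, iff_true]; tauto
  · apply Set.Finite.isClosed
    apply (Set.toFinite ({0, 1} : Set unitInterval)).subset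
    intro t ht
    simp only [Set.mem_ofPred_eq] at ht
    simp only [Set.mem_insert_iff, Set.mem_singleton_iff]
    tauto

/-- Theorem 7.1: if `G` is a connected infinite graph with a vertex of infinite degree, then
no Hausdorff compactification of the 1-complex `|G|` has a totally disconnected remainder:
the remainder always contains a connected subset with at least two points. -/
theorem no_hausdorff_compactification_with_totally_disconnected_remainder
    [Infinite V] (hG : G.Connected) (v : V) (hv : (G.neighborSet v).Infinite)
    {K : Type*} [TopologicalSpace K] [CompactSpace K] [T2Space K]
    (e : OneComplex G → K) (he : Topology.IsEmbedding e) (hdense : DenseRange e) :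
    ∃ S : Set K, S ⊆ (Set.range e)ᶜ ∧ S.Nontrivial ∧ IsPreconnected S := by
  have : Infinite (G.neighborSet v) := hv.to_subtype
  let U : Ultrafilter (G.neighborSet v) := Filter.hyperfilter _
  let d : G.neighborSet v → G.Dart := fun i => ⟨(v, i.1), i.2⟩
  let f : G.neighborSet v → unitInterval → K :=
    fun i t => e (Quotient.mk (oneComplexSetoid G) (d i, t))
  have hf : ∀ i, Continuous (f i) := fun i =>
    he.continuous.comp (continuous_quotient_mk'.comp (by fun_prop))
  obtain ⟨i0⟩ : Nonempty (G.neighborSet v) := inferInstance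
  let vb : OneComplex G := Quotient.mk (oneComplexSetoid G) (d i0, 0)
  have hvb : ∀ d' : G.Dart, d'.fst = v → Quotient.mk (oneComplexSetoid G) (d', 0) = vb := by
    intro d' h
    exact Quotient.sound (Relation.EqvGen.rel _ _ (Or.inr ⟨rfl, rfl, h⟩))
  have hf0 : ∀ i, f i 0 = e vb := fun i => congrArg e (hvb (d i) rfl)
  let h : unitInterval := ⟨1/2, by norm_num, by norm_num⟩
  -- the limit of midpoints
  let p : K := (U.map fun i => f i h).lim
  have hp : Tendsto (fun i => f i h) U (𝓝 p) := (U.map fun i => f i h).le_nhds_lim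
  have hpv : e vb ≠ p := by
    intro hpv
    obtain ⟨Z, hZo, hZ⟩ := aux_star G v
    obtain ⟨O, hO, hOZ⟩ := he.isOpen_iff.1 hZo
    have hvO : vb ∈ e ⁻¹' O := by
      rw [hOZ, hZ]; left; exact ⟨rfl, by norm_num⟩
    have hpO : O ∈ 𝓝 p := hpv ▸ hO.mem_nhds hvO
    obtain ⟨i, hi⟩ := (hp.eventually_mem hpO).exists
    have hi : Quotient.mk (oneComplexSetoid G) (d i, h) ∈ e ⁻¹' O := hi
    rw [hOZ, hZ] at hi
    simp [h] at hi
  obtain ⟨W, hvW, hW, W', hpW', hW', hdis⟩ := exists_open_nhds_disjoint_closure hpv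
  have hpW : p ∉ closure W := fun hx => Set.disjoint_left.1 hdis hx (subset_closure hpW')
  have hs : ∀ i, ∃ s : unitInterval, IsGreatest {t | t ≤ h ∧ f i t ∈ closure W} s := by
    intro i
    apply IsCompact.exists_isGreatest
    · apply IsClosed.isCompact
      exact isClosed_Iic.inter (isClosed_closure.preimage (hf i))
    · exact ⟨0, unitInterval.nonneg', by rw [hf0]; exact subset_closure hvW⟩
  choose s hs using hs
  let C : G.neighborSet v → Set K := fun i => f i '' Set.Icc (s i) h
  have hCW : ∀ᶠ i in (U : Filter _), C i ⊆ Wᶜ := by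
    filter_upwards [hp.eventually_mem (isClosed_closure.isOpen_compl.mem_nhds hpW)] with i hi
    rintro _ ⟨t, ⟨ht1, ht2⟩, rfl⟩
    have hlt : s i < h := lt_of_le_of_ne (hs i).1.1 fun hh => hi (hh ▸ (hs i).1.2)
    have hsub : Set.Ioc (s i) h ⊆ f i ⁻¹' Wᶜ := fun t' ht' hW' =>
      absurd ((hs i).2 ⟨ht'.2, subset_closure hW'⟩) (not_le.2 ht'.1)
    have := closure_minimal hsub (hW.isClosed_compl.preimage (hf i))
    rw [closure_Ioc hlt.ne] at this
    exact this ⟨ht1, ht2⟩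
  set F : Filter K := (U : Filter _).bind fun i => 𝓟 (C i) with hF
  have hmem : ∀ B : Set K, B ∈ F ↔ ∀ᶠ i in (U : Filter _), C i ⊆ B := by
    intro B
    rw [hF, Filter.mem_bind']
    simp [Filter.Eventually]
  have hlim : ∀ (g : G.neighborSet v → K) (x : K), (∀ i, g i ∈ C i) → Tendsto g U (𝓝 x) →
      ClusterPt x F := by
    intro g x hg hx
    have h1 : map g U ≤ F := fun B hB => by
      rw [Filter.mem_map]
      filter_upwards [(hmem B).1 hB] with i hi using hi (hg i)
    exact (ClusterPt.of_le_nhds hx).mono h1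
  have hclus : ∀ x, ClusterPt x F → ∀ B, IsClosed B → (∀ᶠ i in (U : Filter _), C i ⊆ B) →
      x ∈ B := by
    intro x hx B hB hCB
    have : ClusterPt x (𝓟 B) := hx.mono (Filter.le_principal_iff.2 ((hmem B).2 hCB))
    rwa [← mem_closure_iff_clusterPt, hB.closure_eq] at this
  refine ⟨{x | ClusterPt x F}, ?_, ?_, aux_preconn U C fun i =>
    isPreconnected_Icc.image _ (hf i).continuousOn⟩
  · rintro x hx ⟨y, rfl⟩
    have hyW : e y ∈ Wᶜ := hclus _ hx _ hW.isClosed_compl hCW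
    have hyv : y ≠ vb := by rintro rfl; exact hyW hvW
    obtain ⟨⟨d', t⟩, rfl⟩ := Quotient.exists_rep y
    obtain ⟨Z, hZc, hZ⟩ := aux_closed G v {w | w ≠ d'.fst ∧ w ≠ d'.snd}
    obtain ⟨B, hB, hBZ⟩ := he.isClosed_iff.1 hZc
    have hyB : e (Quotient.mk (oneComplexSetoid G) (d', t)) ∈ B := by
      apply hclus _ hx _ hB
      have hfin : {i : G.neighborSet v | i.1 = d'.fst ∨ i.1 = d'.snd}.Finite :=
        ((Set.toFinite {d'.fst, d'.snd}).preimage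
          (Subtype.val_injective.injOn (s := _))).subset (fun i hi => hi)
      have hev : ∀ᶠ i in (U : Filter _),
          i ∈ {i : G.neighborSet v | i.1 = d'.fst ∨ i.1 = d'.snd}ᶜ :=
        hfin.compl_mem_hyperfilter
      filter_upwards [hev] with i hi
      rintro _ ⟨t', -, rfl⟩
      change Quotient.mk (oneComplexSetoid G) (d i, t') ∈ e ⁻¹' B
      rw [hBZ, hZ]
      left
      simp only [Set.mem_compl_iff, Set.mem_ofPred_eq, not_or] at hi
      exact ⟨rfl, hi⟩
    have hyZ : Quotient.mk (oneComplexSetoid G) (d', t) ∈ e ⁻¹' B := hyB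
    rw [hBZ, hZ] at hyZ
    simp only [Set.mem_ofPred_eq, ne_eq, not_true_eq_false, and_false, false_and, or_false,
      false_or] at hyZ
    rcases hyZ with ⟨rfl, h1⟩ | ⟨rfl, h1⟩
    · exact hyv (hvb _ h1)
    · apply hyv
      rw [← hvb d'.symm h1]
      exact Quotient.sound (Relation.EqvGen.rel _ _ (Or.inl ⟨rfl, by simp⟩))
  · let r : K := (U.map fun i => f i (s i)).lim
    have hr : Tendsto (fun i => f i (s i)) U (𝓝 r) := (U.map fun i => f i (s i)).le_nhds_lim
    have hrW : r ∈ closure W :=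
      isClosed_closure.mem_of_tendsto hr (Eventually.of_forall fun i => (hs i).1.2)
    refine ⟨p, hlim _ p (fun i => ⟨h, ⟨(hs i).1.1, le_rfl⟩, rfl⟩) hp, r,
      hlim _ r (fun i => ⟨s i, ⟨le_rfl, (hs i).1.1⟩, rfl⟩) hr, ?_⟩
    intro hpr
    exact hpW (hpr ▸ hrW)
end

section
/- The set of inner edge points is open in the Stone-Čech compactification of the 1-complex: the image stoneCechUnit '' E̊ is an open subset of βG, where E̊ ⊆ |G| denotes the set of inner edge points (the classes of pairs (d, t) with 0 < t < 1). -/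
open SimpleGraph

variable {V : Type*} (G : SimpleGraph V)

open Classical in
/-- A bump function supported on one edge. -/
noncomputable def edgeBump (d : G.Dart) (p : G.Dart × unitInterval) : unitInterval :=
  if p.1 = d ∨ p.1 = d.symm then p.2 * unitInterval.symm p.2 else 0

theorem edgeBump_rel (d : G.Dart) (p q : G.Dart × unitInterval)
    (h : oneComplexRel G p q) : edgeBump G d p = edgeBump G d q := by
  obtain ⟨a, s⟩ := p
  obtain ⟨b, t⟩ := q
  rcases h with ⟨h1, h2⟩ | ⟨h1, h2, -⟩
  · simp only at h1 h2
    subst h1 h2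
    have : (a = d ∨ a = d.symm) ↔ (a.symm = d ∨ a.symm = d.symm) := by
      constructor
      · rintro (rfl | rfl) <;> simp
      · rintro (h | h)
        · right; rw [← h]; simp
        · left; rw [← SimpleGraph.Dart.symm_symm a, h]; simp
    simp only [edgeBump, unitInterval.symm_symm, mul_comm]
    by_cases h : a = d ∨ a = d.symm
    · rw [if_pos h, if_pos (this.1 h)]
    · rw [if_neg h, if_neg (fun h2 => h (this.2 h2))]
  · simp only at h1 h2
    subst h1 h2
    simp [edgeBump]

theorem edgeBump_eqv (d : G.Dart) (p q : G.Dart × unitInterval)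
    (h : (oneComplexSetoid G) p q) : edgeBump G d p = edgeBump G d q := by
  change Relation.EqvGen _ p q at h
  induction h with
  | rel x y h => exact edgeBump_rel G d x y h
  | refl x => rfl
  | symm x y _ ih => exact ih.symm
  | trans x y z _ _ h1 h2 => exact h1.trans h2

theorem edgeBump_continuous (d : G.Dart) : Continuous (edgeBump G d) := by
  rw [continuous_prod_of_discrete_left]
  intro e
  by_cases h : e = d ∨ e = d.symm
  · simp only [edgeBump, h, if_true]
    fun_prop
  · simp only [edgeBump, h, if_false]
    fun_prop

/-- The bump function on the 1-complex. -/
noncomputable def edgeBumpQ (d : G.Dart) : OneComplex G → unitInterval :=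
  Quotient.lift (edgeBump G d) (edgeBump_eqv G d)

theorem edgeBumpQ_continuous (d : G.Dart) : Continuous (edgeBumpQ G d) :=
  (edgeBump_continuous G d).quotient_lift _

theorem edgeBumpQ_pos (d : G.Dart) (x : OneComplex G) (hx : 0 < edgeBumpQ G d x) :
    ∃ t : unitInterval, x = Quotient.mk (oneComplexSetoid G) (d, t) := by
  induction x using Quotient.inductionOn with
  | h p =>
    obtain ⟨e, t⟩ := p
    change 0 < edgeBump G d (e, t) at hx
    by_cases h : e = d ∨ e = d.symm
    · rcases h with rfl | rfl
      · exact ⟨t, rfl⟩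
      · refine ⟨unitInterval.symm t, Quotient.sound ?_⟩
        exact Relation.EqvGen.rel _ _ (Or.inl ⟨by simp, rfl⟩)
    · simp [edgeBump, h] at hx

/-- Lemma 7.2: the set of inner edge points of the 1-complex is open in the Stone-Čech
compactification `βG` of `|G|`. -/
theorem innerEdgePoints_isOpen_in_stoneCech [Infinite V] (hG : G.Connected) :
    IsOpen (stoneCechUnit '' innerEdgePoints G) := by
  have key : stoneCechUnit '' innerEdgePoints G =
      ⋃ d : G.Dart, {z | 0 < stoneCechExtend (edgeBumpQ_continuous G d) z} := by
    have hmk (d : G.Dart) (t : unitInterval) :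
        edgeBumpQ G d (Quotient.mk (oneComplexSetoid G) (d, t)) = t * unitInterval.symm t := by
      change edgeBump G d (d, t) = _
      simp [edgeBump]
    ext z
    simp only [Set.mem_iUnion, Set.mem_setOf_eq]
    constructor
    · rintro ⟨x, ⟨d, t, h0, h1, rfl⟩, rfl⟩
      refine ⟨d, ?_⟩
      rw [stoneCechExtend_stoneCechUnit, hmk, ← Subtype.coe_lt_coe]
      simp only [unitInterval.coe_symm_eq, Set.Icc.coe_mul, Set.Icc.coe_zero]
      exact mul_pos h0 (by linarith)
    · rintro ⟨d, hz⟩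
      have hU : IsOpen {z | 0 < stoneCechExtend (edgeBumpQ_continuous G d) z} :=
        isOpen_lt continuous_const (continuous_stoneCechExtend _)
      have hj : Continuous (fun t : unitInterval =>
          (stoneCechUnit (Quotient.mk (oneComplexSetoid G) (d, t)) : StoneCech (OneComplex G))) :=
        continuous_stoneCechUnit.comp (continuous_quotient_mk'.comp (by fun_prop))
      have hK := (isCompact_range hj).isClosed
      have hzK := closure_minimal (s := {z | 0 < stoneCechExtend (edgeBumpQ_continuous G d) z} ∩
          Set.range stoneCechUnit) (by
        rintro _ ⟨hy, x, rfl⟩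
        rw [Set.mem_setOf_eq, stoneCechExtend_stoneCechUnit] at hy
        obtain ⟨t, rfl⟩ := edgeBumpQ_pos G d x hy
        exact ⟨t, rfl⟩) hK
        (denseRange_stoneCechUnit.open_subset_closure_inter hU hz)
      obtain ⟨t, rfl⟩ := hzK
      simp only at hz
      rw [stoneCechExtend_stoneCechUnit, hmk, ← Subtype.coe_lt_coe] at hz
      simp only [unitInterval.coe_symm_eq, Set.Icc.coe_mul, Set.Icc.coe_zero] at hz
      have h0 := t.2.1
      have h1 := t.2.2
      refine ⟨_, ⟨d, t, ?_, ?_, rfl⟩, rfl⟩ <;> nlinarith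
  rw [key]
  exact isOpen_iUnion fun d => isOpen_lt continuous_const (continuous_stoneCechExtend _)
end
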